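/- The ∃∀-theory of finite nice bipartite posets is undecidable: the set of ∃∀-sentences in the language of posets that are true in every finite nice bipartite poset is not decidable. -/

import Mathlib

open FirstOrder FirstOrder.Language

attribute [local instance] FirstOrder.Language.orderStructure

universe u u' v v' w w'

/-! ### A fixed computable Gödel encoding of sentences in the language of posets -/

instance (n : ℕ) : Encodable (Language.order.Functions n) := inferInstanceAs (Encodable Empty)

instance : Encodable (Σ i, Language.order.Functions i) := Sigma.encodable

instance : Encodable (Σ n, Language.order.Relations n) :=
  Encodable.ofEquiv Unit (Equiv.equivPUnit.{1,1} _)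

instance : Encodable (Σ n, Language.order.BoundedFormula Empty n) :=
  Encodable.ofLeftInjection
    (fun φ => φ.2.listEncode)
    (fun l => (BoundedFormula.listDecode l)[0]?)
    BoundedFormula.encoding.decode_encode

instance : Encodable Language.order.Sentence :=
  Encodable.ofLeftInjection (fun φ => (⟨0, φ⟩ : Σ n, Language.order.BoundedFormula Empty n))
    (fun ψ => match ψ with | ⟨0, φ⟩ => some φ | _ => none)
    (fun _ => rfl)

/-! ### Free lattices, bipartite posets, join covers -/

/-- `ι : X → F` realizes `F` as a free lattice on the set `X`: every map from `X`
to a lattice extends uniquely to a lattice homomorphism on `F`. -/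
def IsFreeLatticeOn {X : Type u} {F : Type v} [Lattice F] (ι : X → F) : Prop :=
  ∀ (L : Type w) [Lattice L] (f : X → L), ∃! h : LatticeHom F L, ∀ x : X, h (ι x) = f x

/-- A bipartite poset: every element is maximal or minimal. -/
def IsBipartitePoset (Q : Type*) [PartialOrder Q] : Prop :=
  ∀ q : Q, IsMax q ∨ IsMin q

/-- A nice bipartite poset (the maximal elements form the top part `A`, the
non-maximal (hence minimal) elements the bottom part `B`): both parts have at
least three elements, every `a ∈ A` is strictly above at least two elements of `B`
and fails to be above at least one element of `B`, and dually for `B`. -/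
def IsNiceBipartitePoset (Q : Type*) [PartialOrder Q] : Prop :=
  IsBipartitePoset Q ∧
  (∃ a₁ a₂ a₃ : Q, IsMax a₁ ∧ IsMax a₂ ∧ IsMax a₃ ∧ a₁ ≠ a₂ ∧ a₁ ≠ a₃ ∧ a₂ ≠ a₃) ∧
  (∃ b₁ b₂ b₃ : Q, ¬IsMax b₁ ∧ ¬IsMax b₂ ∧ ¬IsMax b₃ ∧ b₁ ≠ b₂ ∧ b₁ ≠ b₃ ∧ b₂ ≠ b₃) ∧
  (∀ a : Q, IsMax a →
    (∃ b₁ b₂ : Q, ¬IsMax b₁ ∧ ¬IsMax b₂ ∧ b₁ ≠ b₂ ∧ b₁ < a ∧ b₂ < a) ∧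
    (∃ b : Q, ¬IsMax b ∧ ¬ b ≤ a)) ∧
  (∀ b : Q, ¬IsMax b →
    (∃ a₁ a₂ : Q, IsMax a₁ ∧ IsMax a₂ ∧ a₁ ≠ a₂ ∧ b < a₁ ∧ b < a₂) ∧
    (∃ a : Q, IsMax a ∧ ¬ b ≤ a))

section JoinCovers

variable {L : Type*} [Lattice L]

/-- `S` is a join cover of `p`: a finite (nonempty) subset with `p ≤ sup S`. -/
def IsJoinCover (p : L) (S : Finset L) : Prop :=
  ∃ hS : S.Nonempty, p ≤ S.sup' hS id

/-- A join cover is nontrivial if `p ≰ s` for every `s ∈ S`. -/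
def IsNontrivialJoinCover (p : L) (S : Finset L) : Prop :=
  IsJoinCover p S ∧ ∀ s ∈ S, ¬ p ≤ s

/-- `S` refines `T` if every element of `S` lies below some element of `T`. -/
def FinsetRefines (S T : Finset L) : Prop :=
  ∀ s ∈ S, ∃ t ∈ T, s ≤ t

/-- A join cover `S` of `p` is minimal if every join cover of `p` refining `S` contains `S`. -/
def IsMinimalJoinCover (p : L) (S : Finset L) : Prop :=
  IsJoinCover p S ∧ ∀ T : Finset L, IsJoinCover p T → FinsetRefines T S → S ⊆ T

/-- A join cover `S` of `p` is doubly minimal if it is minimal, nontrivial, and any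
nontrivial join cover of `p` whose join is below the join of `S` has the same join. -/
def IsDoublyMinimalJoinCover (p : L) (S : Finset L) : Prop :=
  IsMinimalJoinCover p S ∧ IsNontrivialJoinCover p S ∧
  ∀ (T : Finset L) (hT : T.Nonempty) (hS : S.Nonempty), IsNontrivialJoinCover p T →
    T.sup' hT id ≤ S.sup' hS id → T.sup' hT id = S.sup' hS id

/-- `ERel p q` : `p ≠ q` and `q` belongs to some doubly minimal join cover of `p`. -/
def ERel (p q : L) : Prop :=
  p ≠ q ∧ ∃ S : Finset L, IsDoublyMinimalJoinCover p S ∧ q ∈ S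

/-- A subset `Y` of a lattice is independent if no member is below the join, nor above
the meet, of a finite nonempty subset of `Y` not containing it. -/
def IsIndependentSubset (Y : Set L) : Prop :=
  ∀ y ∈ Y, ∀ Z : Finset L, ↑Z ⊆ Y \ {y} → ∀ hZ : Z.Nonempty,
    ¬ y ≤ Z.sup' hZ id ∧ ¬ Z.inf' hZ id ≤ y

end JoinCovers

/-- The standard embedding `ξ` of a finite poset `Q`, included in a set `X` via `j`, into
a lattice `F` equipped with `ι : X → F`: `ξ q = inf { ι (j q') : q' ∈ Q, q' ≥ q }`. -/
noncomputable def xiMap {Q : Type u} [PartialOrder Q] [Fintype Q] {X : Type u'} (j : Q → X)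
    {F : Type v} [Lattice F] (ι : X → F) (q : Q) : F := by
  classical
  exact (Finset.univ.filter fun q' : Q => q ≤ q').inf'
    ⟨q, Finset.mem_filter.mpr ⟨Finset.mem_univ q, le_refl q⟩⟩ fun q' => ι (j q')

/-- The word `w_Q` associated to a finite nice bipartite poset `Q`:
`w_Q = ⋀_{a ∈ max Q} (ξ a ⊔ ⋁ { ξ b : b ∈ min Q, b ≰ a })`. -/
noncomputable def wQ {Q : Type u} [PartialOrder Q] [Fintype Q] {X : Type u'} (j : Q → X)
    {F : Type v} [Lattice F] (ι : X → F) (hQ : IsNiceBipartitePoset Q) : F := by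
  classical
  have hA : (Finset.univ.filter fun a : Q => IsMax a).Nonempty := by
    obtain ⟨a₁, -, -, h₁, -⟩ := hQ.2.1
    exact ⟨a₁, Finset.mem_filter.mpr ⟨Finset.mem_univ _, h₁⟩⟩
  have hB : ∀ a : Q, (Finset.univ.filter fun b : Q => ¬ IsMax b ∧ ¬ b ≤ a).Nonempty := by
    intro a
    by_cases hmax : IsMax a
    · obtain ⟨b, hb1, hb2⟩ := (hQ.2.2.2.1 a hmax).2
      exact ⟨b, Finset.mem_filter.mpr ⟨Finset.mem_univ _, hb1, hb2⟩⟩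
    · have hmin : IsMin a := (hQ.1 a).resolve_left hmax
      obtain ⟨b₁, b₂, b₃, h1, h2, h3, h12, h13, h23⟩ := hQ.2.2.1
      rcases eq_or_ne b₁ a with rfl | hne
      · refine ⟨b₂, Finset.mem_filter.mpr ⟨Finset.mem_univ _, h2, fun hle => ?_⟩⟩
        exact h12 (le_antisymm (hmin hle) hle)
      · refine ⟨b₁, Finset.mem_filter.mpr ⟨Finset.mem_univ _, h1, fun hle => ?_⟩⟩
        exact hne (le_antisymm hle (hmin hle))
  exact (Finset.univ.filter fun a : Q => IsMax a).inf' hA fun a =>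
    xiMap j ι a ⊔
      (Finset.univ.filter fun b : Q => ¬ IsMax b ∧ ¬ b ≤ a).sup' (hB a) (xiMap j ι)

/-- Universally quantify the last `l` (de Bruijn) variables of a bounded formula. -/
def BoundedFormula.allsLast {L : Language} {α : Type*} :
    ∀ {n : ℕ} (l : ℕ), L.BoundedFormula α (n + l) → L.BoundedFormula α n
  | _, 0, ψ => ψ
  | _, l + 1, ψ => BoundedFormula.allsLast l ψ.all

/-- An `∃∀`-sentence in the language of posets: a sentence of the form
`∃ x₁ … x_k ∀ y₁ … y_l, ψ` with `ψ` quantifier-free. -/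
def IsEASentence (φ : Language.order.Sentence) : Prop :=
  ∃ (k l : ℕ) (ψ : Language.order.BoundedFormula Empty (k + l)),
    ψ.IsQF ∧ φ = (BoundedFormula.allsLast l ψ).exs

namespace PosetCoding

open Nat.Partrec (Code)

/-- The binary relation symbols describing a partial recursive computation; `same` is equality
of numbers. -/
inductive Symb : Type
  | same | fst | snd | zero | succ | lt
  | eval (c : Code)

/-- A numbering of the relation symbols. -/
def Symb.idx : Symb → ℕ
  | same => 0
  | fst => 1
  | snd => 2
  | zero => 3
  | succ => 4
  | lt => 5
  | eval c => 6 + Encodable.encode c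

theorem Symb.idx_injective : Function.Injective Symb.idx := by
  intro s t h
  cases s <;> cases t <;> simp only [Symb.idx] at h <;> first | rfl | omega | skip
  rw [Encodable.encode_injective (Nat.add_left_cancel h)]

section Theory

variable {Q : Type*} (rel : Symb → Q → Q → Prop)

/-- `c` represents the pair `(a, b)`. -/
def Splits (a b c : Q) : Prop := rel .fst c a ∧ rel .snd c b

/-- The recursive description of Cantor-style unpairing along successors. -/
def PairStep (a b c : Q) : Prop :=
  (rel .zero a a ∧ rel .zero b b ∧ rel .zero c c) ∨
  ∃ c' a' b', rel .succ c' c ∧ Splits rel a' b' c' ∧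
    ((a' = b' ∧ rel .zero a a ∧ rel .succ b' b) ∨
     (rel .lt b' a' ∧ a = a' ∧ rel .succ b' b) ∨
     (rel .succ a' b' ∧ a = b' ∧ rel .zero b b) ∨
     (rel .succ a' a ∧ rel .lt a b' ∧ b = b'))

/-- What must be witnessed when a code is claimed to send `x` to `y`. -/
def Justified : Code → Q → Q → Prop
  | .zero, _, y => rel .zero y y
  | .succ, x, y => rel .succ x y
  | .left, x, y => ∃ z, Splits rel y z x
  | .right, x, y => ∃ z, Splits rel z y x
  | .pair f g, x, y => ∃ u v, rel (.eval f) x u ∧ rel (.eval g) x v ∧ Splits rel u v y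
  | .comp f g, x, y => ∃ u, rel (.eval g) x u ∧ rel (.eval f) u y
  | .prec f g, x, y => ∃ a m, Splits rel a m x ∧
      ((rel .zero m m ∧ rel (.eval f) a y) ∨
        ∃ m' x' i t s, rel .succ m' m ∧ Splits rel a m' x' ∧ rel (.eval (.prec f g)) x' i ∧
          Splits rel m' i t ∧ Splits rel a t s ∧ rel (.eval g) s y)
  | .rfind' f, x, y => ∃ a m v, Splits rel a m x ∧ rel (.eval f) x v ∧
      ((rel .zero v v ∧ y = m) ∨
        ∃ v' m' x', rel .succ v' v ∧ rel .succ m m' ∧ Splits rel a m' x' ∧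
          rel (.eval (.rfind' f)) x' y)

/-- The relations locally look like a computation of codes numbered up to `e`. -/
structure IsComputation (e : ℕ) : Prop where
  lt_irrefl : ∀ x, ¬ rel .lt x x
  lt_trans : ∀ x y z, rel .lt x y → rel .lt y z → rel .lt x z
  succ_lt : ∀ x y, rel .succ x y → rel .lt x y
  succ_inj : ∀ x x' y, rel .succ x y → rel .succ x' y → x = x'
  zero_not_succ : ∀ x y, rel .zero x x → ¬ rel .succ y x
  lt_step : ∀ x y, rel .lt x y → rel .succ x y ∨ ∃ z, rel .succ z y ∧ rel .lt x z
  pair_step : ∀ a b c, Splits rel a b c → PairStep rel a b c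
  justified : ∀ k : Fin (e + 1), ∀ x y, rel (.eval (Denumerable.ofNat Code k)) x y →
    Justified rel (Denumerable.ofNat Code k) x y

variable {rel} {e : ℕ}

theorem pair_succ_cases {a b a' b' : ℕ}
    (h : (a' = b' ∧ a = 0 ∧ b = b' + 1) ∨ (b' < a' ∧ a = a' ∧ b = b' + 1) ∨
      (b' = a' + 1 ∧ a = b' ∧ b = 0) ∨ (a = a' + 1 ∧ a < b' ∧ b = b')) :
    Nat.pair a b = Nat.pair a' b' + 1 := by
  unfold Nat.pair
  rcases h with ⟨rfl, rfl, rfl⟩ | ⟨h, rfl, rfl⟩ | ⟨rfl, rfl, rfl⟩ | ⟨rfl, h, rfl⟩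
  · simp; ring
  · rw [if_neg (by omega), if_neg (by omega)]; ring
  · rw [if_neg (by omega), if_pos (by omega)]; ring
  · rw [if_pos (by omega), if_pos (by omega)]; ring

/-- Elements of a finite computation carry numerical values. -/
theorem IsComputation.exists_value [Finite Q] (h : IsComputation rel e) :
    ∃ num : Q → ℕ, (∀ x, rel .zero x x → num x = 0) ∧
      (∀ x y, rel .succ x y → num y = num x + 1) ∧
      (∀ a b c, Splits rel a b c → num c = Nat.pair (num a) (num b)) := by
  classical
  have : IsTrans Q (rel .lt) := ⟨h.lt_trans⟩
  have : Std.Irrefl (rel .lt) := ⟨h.lt_irrefl⟩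
  have wf : WellFounded (rel .lt) := Finite.wellFounded_of_trans_of_irrefl _
  let num : Q → ℕ := wf.fix fun y ih =>
    if hy : ∃ x, rel .succ x y then ih hy.choose (h.succ_lt _ _ hy.choose_spec) + 1 else 0
  have num_eq : ∀ y, num y = if hy : ∃ x, rel .succ x y then num hy.choose + 1 else 0 :=
    fun y => wf.fix_eq _ y
  have hz : ∀ x, rel .zero x x → num x = 0 := by
    intro x hx
    rw [num_eq, dif_neg]
    rintro ⟨y, hy⟩
    exact h.zero_not_succ x y hx hy
  have hs : ∀ x y, rel .succ x y → num y = num x + 1 := by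
    intro x y hxy
    have hy : ∃ x, rel .succ x y := ⟨x, hxy⟩
    rw [num_eq y, dif_pos hy, h.succ_inj _ _ _ hy.choose_spec hxy]
  have hl : ∀ y x, rel .lt x y → num x < num y := by
    intro y
    induction y using wf.induction with
    | _ y ih =>
      intro x hxy
      rcases h.lt_step x y hxy with h1 | ⟨z, hz, hxz⟩
      · have := hs _ _ h1; omega
      · have := hs _ _ hz
        have := ih z (h.succ_lt _ _ hz) x hxz
        omega
  refine ⟨num, hz, hs, fun a b c => ?_⟩
  induction c using wf.induction generalizing a b with
  | _ c ih =>
    intro hc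
    rcases h.pair_step a b c hc with ⟨ha, hb, hc⟩ | ⟨c', a', b', hcc, hsp, hcase⟩
    · rw [hz _ ha, hz _ hb, hz _ hc]; rfl
    · rw [hs _ _ hcc, ih c' (h.succ_lt _ _ hcc) a' b' hsp]
      refine (pair_succ_cases ?_).symm
      rcases hcase with ⟨rfl, h1, h2⟩ | ⟨h1, rfl, h2⟩ | ⟨h1, rfl, h2⟩ | ⟨h1, h2, rfl⟩
      · exact Or.inl ⟨rfl, hz _ h1, hs _ _ h2⟩
      · exact Or.inr (Or.inl ⟨hl _ _ h1, rfl, hs _ _ h2⟩)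
      · exact Or.inr (Or.inr (Or.inl ⟨hs _ _ h1, rfl, hz _ h2⟩))
      · exact Or.inr (Or.inr (Or.inr ⟨hs _ _ h1, hl _ _ h2, rfl⟩))

theorem mem_eval_rfind'_zero {f : Code} {a m : ℕ} (h : 0 ∈ f.eval (Nat.pair a m)) :
    m ∈ (Code.rfind' f).eval (Nat.pair a m) := by
  obtain ⟨k, hk⟩ := Code.evaln_complete.1 h
  refine Code.evaln_complete.2 ⟨k, ?_⟩
  have hb := Code.evaln_bound hk
  obtain ⟨k, rfl⟩ : ∃ j, k = j + 1 := ⟨k - 1, by omega⟩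
  simp only [Code.evaln, Option.mem_def, Nat.unpaired, Nat.unpair_pair]
  simp only [Option.mem_def] at hk
  simp [hk, Nat.lt_succ_iff.1 hb]

theorem mem_eval_rfind'_succ {f : Code} {a m v y : ℕ} (h : v + 1 ∈ f.eval (Nat.pair a m))
    (hy : y ∈ (Code.rfind' f).eval (Nat.pair a (m + 1))) :
    y ∈ (Code.rfind' f).eval (Nat.pair a m) := by
  obtain ⟨k, hk⟩ := Code.evaln_complete.1 h
  obtain ⟨l, hl⟩ := Code.evaln_complete.1 hy
  refine Code.evaln_complete.2 ⟨max k l + 1, ?_⟩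
  have hb := Code.evaln_bound hk
  replace hk := Code.evaln_mono (le_max_left k l |>.trans (Nat.le_succ _)) hk
  replace hl := Code.evaln_mono (le_max_right k l) hl
  simp only [Code.evaln, Option.mem_def, Nat.unpaired, Nat.unpair_pair] at *
  simp [hk, hl, hb.le]

theorem mem_eval_pair {f g : Code} {x u v : ℕ} (hu : u ∈ f.eval x) (hv : v ∈ g.eval x) :
    Nat.pair u v ∈ (Code.pair f g).eval x :=
  Part.mem_bind (Part.mem_map _ hu) (Part.mem_map _ hv)

theorem IsComputation.mem_eval [Finite Q] (h : IsComputation rel e) {num : Q → ℕ}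
    (hz : ∀ x, rel .zero x x → num x = 0) (hs : ∀ x y, rel .succ x y → num y = num x + 1)
    (hp : ∀ a b c, Splits rel a b c → num c = Nat.pair (num a) (num b))
    (c : Code) (hc : Encodable.encode c ≤ e) (x y : Q) (hxy : rel (.eval c) x y) :
    num y ∈ c.eval (num x) := by
  have just : ∀ c : Code, Encodable.encode c ≤ e → ∀ x y, rel (.eval c) x y →
      Justified rel c x y := by
    intro c hc
    have := h.justified ⟨Encodable.encode c, by omega⟩
    simpa using this
  induction c generalizing x y with
  | zero =>
    have := just _ hc _ _ hxy
    simp [Code.eval, hz _ this, pure, PFun.pure]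
  | succ =>
    have := just _ hc _ _ hxy
    simp [Code.eval, hs _ _ this]
  | left =>
    obtain ⟨z, hz⟩ := just _ hc _ _ hxy
    simp [Code.eval, hp _ _ _ hz]
  | right =>
    obtain ⟨z, hz⟩ := just _ hc _ _ hxy
    simp [Code.eval, hp _ _ _ hz]
  | pair f g hf hg =>
    obtain ⟨hfl, hgl⟩ := Code.encode_lt_pair f g
    obtain ⟨u, v, hu, hv, hsp⟩ := just _ hc _ _ hxy
    have h1 := hf (by omega) _ _ hu
    have h2 := hg (by omega) _ _ hv
    rw [hp _ _ _ hsp]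
    exact mem_eval_pair h1 h2
  | comp f g hf hg =>
    obtain ⟨hfl, hgl⟩ := Code.encode_lt_comp f g
    obtain ⟨u, hu, hv⟩ := just _ hc _ _ hxy
    exact Part.mem_bind (hg (by omega) _ _ hu) (hf (by omega) _ _ hv)
  | prec f g hf hg =>
    obtain ⟨hfl, hgl⟩ := Code.encode_lt_prec f g
    have key : ∀ n a m x y, num m = n → Splits rel a m x → rel (.eval (.prec f g)) x y →
        num y ∈ (Code.prec f g).eval (num x) := by
      intro n
      induction n with
      | zero =>
        intro a m x y hn hsp hxy
        obtain ⟨a', m', hsp', hcase⟩ := just _ hc _ _ hxy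
        obtain ⟨ha, hm⟩ := Nat.pair_eq_pair.1 ((hp _ _ _ hsp).symm.trans (hp _ _ _ hsp'))
        rcases hcase with ⟨-, h2⟩ | ⟨m'', x', i, t, s, h1, -⟩
        · rw [hp _ _ _ hsp, hn, Code.eval_prec_zero, ha]
          exact hf (by omega) _ _ h2
        · have := hs _ _ h1; omega
      | succ n ih =>
        intro a m x y hn hsp hxy
        obtain ⟨a', m', hsp', hcase⟩ := just _ hc _ _ hxy
        obtain ⟨ha, hm⟩ := Nat.pair_eq_pair.1 ((hp _ _ _ hsp).symm.trans (hp _ _ _ hsp'))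
        rcases hcase with ⟨h1, -⟩ | ⟨m'', x', i, t, s, h1, h2, h3, h4, h5, h6⟩
        · have := hz _ h1; omega
        · have hm'' := hs _ _ h1
          rw [hp _ _ _ hsp', hm'', Code.eval_prec_succ]
          simp only [Part.bind_eq_bind, Part.mem_bind_iff]
          refine ⟨num i, ?_, ?_⟩
          · rw [← hp _ _ _ h2]
            exact ih _ _ _ _ (by omega) h2 h3
          · rw [← hp _ _ _ h4, ← hp _ _ _ h5]
            exact hg (by omega) _ _ h6
    obtain ⟨a, m, hsp, -⟩ := just _ hc _ _ hxy
    exact key _ _ _ _ _ rfl hsp hxy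
  | rfind' f hf =>
    have hfl := Code.encode_lt_rfind' f
    obtain ⟨B, hB⟩ : ∃ B, ∀ x, num x ≤ B := by
      cases nonempty_fintype Q
      exact ⟨Finset.univ.sup num, fun x => Finset.le_sup (Finset.mem_univ x)⟩
    have key : ∀ n a m x y, B ≤ num m + n → Splits rel a m x →
        rel (.eval (.rfind' f)) x y → num y ∈ (Code.rfind' f).eval (num x) := by
      intro n
      induction n with
      | zero =>
        intro a m x y hn hsp hxy
        obtain ⟨a', m', v, hsp', hv, hcase⟩ := just _ hc _ _ hxy
        obtain ⟨ha, hm⟩ := Nat.pair_eq_pair.1 ((hp _ _ _ hsp).symm.trans (hp _ _ _ hsp'))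
        have hv' := hf (by omega) _ _ hv
        rcases hcase with ⟨h1, rfl⟩ | ⟨v', m'', x', h1, h2, h3, h4⟩
        · rw [hp _ _ _ hsp'] at hv' ⊢
          rw [hz _ h1] at hv'
          exact mem_eval_rfind'_zero hv'
        · have := hs _ _ h2
          have := hB m''
          omega
      | succ n ih =>
        intro a m x y hn hsp hxy
        obtain ⟨a', m', v, hsp', hv, hcase⟩ := just _ hc _ _ hxy
        obtain ⟨ha, hm⟩ := Nat.pair_eq_pair.1 ((hp _ _ _ hsp).symm.trans (hp _ _ _ hsp'))
        have hv' := hf (by omega) _ _ hv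
        rcases hcase with ⟨h1, rfl⟩ | ⟨v', m'', x', h1, h2, h3, h4⟩
        · rw [hp _ _ _ hsp'] at hv' ⊢
          rw [hz _ h1] at hv'
          exact mem_eval_rfind'_zero hv'
        · have hm'' := hs _ _ h2
          have := ih _ _ _ _ (by omega) h3 h4
          rw [hp _ _ _ h3, hm''] at this
          rw [hp _ _ _ hsp'] at hv' ⊢
          rw [hs _ _ h1] at hv'
          exact mem_eval_rfind'_succ hv' this
    obtain ⟨a, m, v, hsp, -⟩ := just _ hc _ _ hxy
    exact key B _ _ _ _ (by omega) hsp hxy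

/-- A chain of successors starting at zero counts up. -/
theorem IsComputation.dom_eval [Finite Q] (h : IsComputation rel e) {c : Code}
    (hc : Encodable.encode c ≤ e) {n : ℕ} (t : ℕ → Q) (h0 : rel .zero (t 0) (t 0))
    (ht : ∀ i < n, rel .succ (t i) (t (i + 1))) {y : Q} (hy : rel (.eval c) (t n) y) :
    (c.eval n).Dom := by
  obtain ⟨num, hz, hs, hp⟩ := h.exists_value
  have key : ∀ i ≤ n, num (t i) = i := by
    intro i
    induction i with
    | zero => exact fun _ => hz _ h0
    | succ i ih => exact fun hi => by rw [hs _ _ (ht i hi), ih (by omega)]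
  have := h.mem_eval hz hs hp c hc _ _ hy
  rw [key n le_rfl] at this
  exact Part.dom_iff_mem.2 ⟨_, this⟩

end Theory

section Standard

/-- The intended meaning of the relation symbols on numbers, with `K` steps of evaluation. -/
def Std (K : ℕ) : Symb → ℕ → ℕ → Prop
  | .same, i, j => i = j
  | .fst, i, j => j = i.unpair.1
  | .snd, i, j => j = i.unpair.2
  | .zero, i, j => i = 0 ∧ j = 0
  | .succ, i, j => j = i + 1
  | .lt, i, j => i < j
  | .eval c, i, j => j ∈ Code.evaln K c i

variable {Q : Type*} {rel : Symb → Q → Q → Prop} {e K N : ℕ} {ι : ℕ → Q}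

theorem justified_of_std (hKN : K ≤ N)
    (hN : ∀ d ≤ e, ∀ x y, y ∈ Code.evaln K (Denumerable.ofNat Code d) x → y ≤ N)
    (hι : ∀ s : Symb, s.idx < 7 + e → ∀ i ≤ N, ∀ j ≤ N, (rel s (ι i) (ι j) ↔ Std K s i j))
    (c : Code) (hc : Encodable.encode c ≤ e) {i j : ℕ} (hi : i ≤ N) (hj : j ≤ N)
    (h : j ∈ Code.evaln K c i) : Justified rel c (ι i) (ι j) := by
  have hsp : ∀ {a b : ℕ}, Nat.pair a b ≤ N → Splits rel (ι a) (ι b) (ι (Nat.pair a b)) := by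
    intro a b hab
    have := Nat.left_le_pair a b
    have := Nat.right_le_pair a b
    exact ⟨(hι .fst (by simp only [Symb.idx]; omega) _ hab _ (by omega)).2 (by simp [Std]),
      (hι .snd (by simp only [Symb.idx]; omega) _ hab _ (by omega)).2 (by simp [Std])⟩
  have hz : rel .zero (ι 0) (ι 0) :=
    (hι .zero (by simp only [Symb.idx]; omega) _ (by omega) _ (by omega)).2 ⟨rfl, rfl⟩
  have hs : ∀ {a : ℕ}, a + 1 ≤ N → rel .succ (ι a) (ι (a + 1)) := fun ha =>
    (hι .succ (by simp only [Symb.idx]; omega) _ (by omega) _ ha).2 rfl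
  have hev : ∀ {d : Code} {a b : ℕ}, Encodable.encode d ≤ e → b ≤ N → b ∈ Code.evaln K d a →
      rel (.eval d) (ι a) (ι b) := fun hd hb h =>
    (hι (.eval _) (by simp only [Symb.idx]; omega) _ (by have := Code.evaln_bound h; omega)
      _ hb).2 h
  have hout : ∀ {d : Code} {a b : ℕ}, Encodable.encode d ≤ e → b ∈ Code.evaln K d a → b ≤ N :=
    fun hd h => hN _ hd _ _ (by simpa using h)
  obtain ⟨k, rfl⟩ : ∃ k, K = k + 1 := ⟨K - 1, by have := Code.evaln_bound h; omega⟩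
  have hmono : ∀ {d : Code} {a b : ℕ}, b ∈ Code.evaln k d a → b ∈ Code.evaln (k + 1) d a :=
    fun h => Code.evaln_mono (Nat.le_succ k) h
  cases c with
  | zero =>
    simp [Code.evaln, Option.bind_eq_some_iff] at h
    obtain ⟨-, rfl⟩ := h
    exact hz
  | succ =>
    simp [Code.evaln, Option.bind_eq_some_iff] at h
    obtain ⟨-, rfl⟩ := h
    exact hs hj
  | left =>
    simp [Code.evaln, Option.bind_eq_some_iff] at h
    obtain ⟨-, rfl⟩ := h
    refine ⟨ι i.unpair.2, ?_⟩
    have := hsp (a := i.unpair.1) (b := i.unpair.2) (by simpa)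
    simpa using this
  | right =>
    simp [Code.evaln, Option.bind_eq_some_iff] at h
    obtain ⟨-, rfl⟩ := h
    refine ⟨ι i.unpair.1, ?_⟩
    have := hsp (a := i.unpair.1) (b := i.unpair.2) (by simpa)
    simpa using this
  | pair f g =>
    obtain ⟨hfl, hgl⟩ := Code.encode_lt_pair f g
    simp [Code.evaln, Option.bind_eq_some_iff, Seq.seq] at h
    obtain ⟨-, u, hu, v, hv, rfl⟩ := h
    have := Nat.left_le_pair u v
    have := Nat.right_le_pair u v
    exact ⟨ι u, ι v, hev (by omega) (by omega) hu, hev (by omega) (by omega) hv, hsp hj⟩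
  | comp f g =>
    obtain ⟨hfl, hgl⟩ := Code.encode_lt_comp f g
    simp [Code.evaln, Option.bind_eq_some_iff] at h
    obtain ⟨-, u, hu, hv⟩ := h
    exact ⟨ι u, hev (by omega) (hout (by omega) hu) hu, hev (by omega) hj hv⟩
  | prec f g =>
    obtain ⟨hfl, hgl⟩ := Code.encode_lt_prec f g
    obtain ⟨a, m, rfl⟩ : ∃ a m, i = Nat.pair a m := ⟨i.unpair.1, i.unpair.2, by simp⟩
    refine ⟨ι a, ι m, hsp hi, ?_⟩
    cases m with
    | zero =>
      simp [Code.evaln, Option.bind_eq_some_iff] at h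
      exact Or.inl ⟨hz, hev (by omega) hj h.2⟩
    | succ m =>
      simp [Code.evaln, Option.bind_eq_some_iff] at h
      obtain ⟨-, p, hp, hg⟩ := h
      have h1 := Code.evaln_bound hp
      have h2 := Code.evaln_bound hg
      have := Nat.right_le_pair a (m + 1)
      have := Nat.right_le_pair a (Nat.pair m p)
      have := Nat.right_le_pair m p
      exact Or.inr ⟨ι m, ι (Nat.pair a m), ι p, ι (Nat.pair m p), ι (Nat.pair a (Nat.pair m p)),
        hs (by omega), hsp (by omega), hev (by omega) (by omega) (hmono hp), hsp (by omega),
        hsp (by omega), hev (by omega) hj hg⟩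
  | rfind' f =>
    have hfl := Code.encode_lt_rfind' f
    obtain ⟨a, m, rfl⟩ : ∃ a m, i = Nat.pair a m := ⟨i.unpair.1, i.unpair.2, by simp⟩
    simp [Code.evaln, Option.bind_eq_some_iff] at h
    obtain ⟨-, v, hv, h⟩ := h
    have hv' := hout (by omega) hv
    refine ⟨ι a, ι m, ι v, hsp hi, hev (by omega) hv' hv, ?_⟩
    cases v with
    | zero =>
      simp at h
      exact Or.inl ⟨hz, by rw [h]⟩
    | succ v =>
      simp at h
      have h1 := Code.evaln_bound h
      have := Nat.right_le_pair a (m + 1)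
      exact Or.inr ⟨ι v, ι (m + 1), ι (Nat.pair a (m + 1)), hs hv', hs (by omega),
        hsp (by omega), hev (by omega) hj (hmono h)⟩

/-- The standard relations on an initial segment of the numbers form a computation. -/
theorem isComputation_of_std (hKN : K ≤ N)
    (hN : ∀ d ≤ e, ∀ x y, y ∈ Code.evaln K (Denumerable.ofNat Code d) x → y ≤ N)
    (hι : ∀ s : Symb, s.idx < 7 + e → ∀ i ≤ N, ∀ j ≤ N, (rel s (ι i) (ι j) ↔ Std K s i j))
    (hdom : ∀ s : Symb, s.idx < 7 + e → ∀ x y, rel s x y →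
      ∃ i ≤ N, ∃ j ≤ N, ι i = x ∧ ι j = y) :
    IsComputation rel e := by
  have hsame : ∀ i ≤ N, ∀ j ≤ N, ι i = ι j → i = j := by
    intro i hi j hj hij
    rw [← show Std K .same i j ↔ i = j from Iff.rfl,
      ← hι .same (by simp only [Symb.idx]; omega) i hi j hj, ← hij,
      hι .same (by simp only [Symb.idx]; omega) i hi i hi]
    rfl
  have hz : ∀ i ≤ N, ∀ j ≤ N, (rel .zero (ι i) (ι j) ↔ i = 0 ∧ j = 0) :=
    hι .zero (by simp only [Symb.idx]; omega)
  have hs : ∀ i ≤ N, ∀ j ≤ N, (rel .succ (ι i) (ι j) ↔ j = i + 1) :=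
    hι .succ (by simp only [Symb.idx]; omega)
  have hl : ∀ i ≤ N, ∀ j ≤ N, (rel .lt (ι i) (ι j) ↔ i < j) :=
    hι .lt (by simp only [Symb.idx]; omega)
  have hfst : ∀ i ≤ N, ∀ j ≤ N, (rel .fst (ι i) (ι j) ↔ j = i.unpair.1) :=
    hι .fst (by simp only [Symb.idx]; omega)
  have hsnd : ∀ i ≤ N, ∀ j ≤ N, (rel .snd (ι i) (ι j) ↔ j = i.unpair.2) :=
    hι .snd (by simp only [Symb.idx]; omega)
  have dz := hdom .zero (by simp only [Symb.idx]; omega)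
  have ds := hdom .succ (by simp only [Symb.idx]; omega)
  have dl := hdom .lt (by simp only [Symb.idx]; omega)
  have dfst := hdom .fst (by simp only [Symb.idx]; omega)
  have dsnd := hdom .snd (by simp only [Symb.idx]; omega)
  refine ⟨fun x h => ?_, fun x y z h1 h2 => ?_, fun x y h => ?_, fun x x' y h1 h2 => ?_,
    fun x y h1 h2 => ?_, fun x y h => ?_, fun a b c h => ?_, fun k x y h => ?_⟩
  · obtain ⟨i, hi, -, -, rfl, -⟩ := dl _ _ h
    exact lt_irrefl _ ((hl i hi i hi).1 h)
  · obtain ⟨i, hi, j, hj, rfl, rfl⟩ := dl _ _ h1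
    obtain ⟨-, -, k, hk, -, rfl⟩ := dl _ _ h2
    rw [hl _ ‹_› _ ‹_›] at *
    omega
  · obtain ⟨i, hi, j, hj, rfl, rfl⟩ := ds _ _ h
    rw [hs _ hi _ hj] at h
    rw [hl _ hi _ hj]
    omega
  · obtain ⟨i, hi, j, hj, rfl, rfl⟩ := ds _ _ h1
    obtain ⟨k, hk, -, -, rfl, -⟩ := ds _ _ h2
    rw [hs _ ‹_› _ ‹_›] at *
    rw [show i = k by omega]
  · obtain ⟨i, hi, j, hj, rfl, hij⟩ := dz _ _ h1
    obtain ⟨k, hk, -, -, rfl, -⟩ := ds _ _ h2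
    rw [hz _ hi _ hi] at h1
    rw [hs _ hk _ hi] at h2
    omega
  · obtain ⟨i, hi, j, hj, rfl, rfl⟩ := dl _ _ h
    rw [hl _ hi _ hj] at h
    rw [hs _ hi _ hj]
    refine or_iff_not_imp_left.2 fun h' => ⟨ι (j - 1), ?_, ?_⟩
    · rw [hs _ (by omega) _ hj]; omega
    · rw [hl _ hi _ (by omega)]; omega
  · obtain ⟨h1, h2⟩ := h
    obtain ⟨k, hk, a, ha, rfl, rfl⟩ := dfst _ _ h1
    obtain ⟨-, -, b, hb, -, rfl⟩ := dsnd _ _ h2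
    rw [hfst _ hk _ ha] at h1
    rw [hsnd _ hk _ hb] at h2
    have hk' : Nat.pair a b = k := by simp [h1, h2]
    clear h1 h2
    cases k with
    | zero =>
      obtain ⟨rfl, rfl⟩ : a = 0 ∧ b = 0 := by
        have := Nat.left_le_pair a b
        have := Nat.right_le_pair a b
        omega
      have := (hz 0 hk 0 hk).2 ⟨rfl, rfl⟩
      exact Or.inl ⟨this, this, this⟩
    | succ k =>
      obtain ⟨a', b', rfl⟩ : ∃ a' b', k = Nat.pair a' b' := ⟨k.unpair.1, k.unpair.2, by simp⟩
      have ha' : a' ≤ N := (Nat.left_le_pair a' b').trans (by omega)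
      have hb' : b' ≤ N := (Nat.right_le_pair a' b').trans (by omega)
      have hdet : ∀ p q, Nat.pair p q = Nat.pair a' b' + 1 → a = p ∧ b = q := fun p q hpq =>
        Nat.pair_eq_pair.1 (hk'.trans hpq.symm)
      refine Or.inr ⟨ι (Nat.pair a' b'), ι a', ι b', (hs _ (by omega) _ hk).2 rfl,
        ⟨(hfst _ (by omega) _ ha').2 (by simp), (hsnd _ (by omega) _ hb').2 (by simp)⟩, ?_⟩
      rcases lt_trichotomy a' b' with h | h | h
      · rcases eq_or_ne b' (a' + 1) with h' | h'
        · obtain ⟨rfl, rfl⟩ := hdet b' 0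
            (pair_succ_cases (Or.inr (Or.inr (Or.inl ⟨h', rfl, rfl⟩))))
          exact Or.inr (Or.inr (Or.inl ⟨(hs _ ha' _ hb').2 h', rfl,
            (hz _ hb _ hb).2 ⟨rfl, rfl⟩⟩))
        · obtain ⟨rfl, rfl⟩ := hdet (a' + 1) b'
            (pair_succ_cases (Or.inr (Or.inr (Or.inr ⟨rfl, by omega, rfl⟩))))
          exact Or.inr (Or.inr (Or.inr ⟨(hs _ ha' _ ha).2 rfl, (hl _ ha _ hb').2 (by omega),
            rfl⟩))
      · subst h
        obtain ⟨rfl, rfl⟩ := hdet 0 (a' + 1) (pair_succ_cases (Or.inl ⟨rfl, rfl, rfl⟩))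
        exact Or.inl ⟨rfl, (hz _ ha _ ha).2 ⟨rfl, rfl⟩, (hs _ hb' _ hb).2 rfl⟩
      · obtain ⟨rfl, rfl⟩ := hdet a' (b' + 1) (pair_succ_cases (Or.inr (Or.inl ⟨h, rfl, rfl⟩)))
        exact Or.inr (Or.inl ⟨(hl _ hb' _ ha').2 h, rfl, (hs _ hb' _ hb).2 rfl⟩)
  · have hk : Encodable.encode (Denumerable.ofNat Code (k : ℕ)) ≤ e := by
      simpa using Nat.lt_succ_iff.1 k.2
    have hk' : (Symb.eval (Denumerable.ofNat Code (k : ℕ))).idx < 7 + e := by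
      simp only [Symb.idx]; omega
    obtain ⟨i, hi, j, hj, rfl, rfl⟩ := hdom _ hk' _ _ h
    exact justified_of_std hKN hN hι _ hk hi hj ((hι _ hk' _ hi _ hj).1 h)

/-- Outputs of boundedly many evaluations are bounded. -/
theorem exists_output_bound (K e : ℕ) :
    ∃ N, ∀ d ≤ e, ∀ x y, y ∈ Code.evaln K (Denumerable.ofNat Code d) x → y ≤ N := by
  refine ⟨(Finset.range (e + 1)).sup fun d => (Finset.range K).sup fun x =>
    (Code.evaln K (Denumerable.ofNat Code d) x).getD 0, fun d hd x y h => ?_⟩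
  refine le_trans ?_ (Finset.le_sup (Finset.mem_range.2 (Nat.lt_succ_of_le hd)))
  refine le_trans ?_ (Finset.le_sup (Finset.mem_range.2 (Code.evaln_bound h)))
  rw [Option.mem_def.1 h]
  rfl

end Standard

section Relations

variable {Q : Type*} [PartialOrder Q] {r : ℕ}

/-- `x` has color `c` when it lies above exactly the first `c` constants. -/
def Colored (g : Fin r → Q) (c : ℕ) (x : Q) : Prop := ∀ j : Fin r, g j ≤ x ↔ (j : ℕ) < c

/-- Some element lies below a source `x`, a target `y` and a label of number `k`. -/
def IsFact (g : Fin r → Q) (k : ℕ) (x y : Q) : Prop :=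
  ∃ f l, f < x ∧ f < y ∧ f < l ∧ Colored g (2 + k) l ∧ Colored g 0 x ∧ Colored g 1 y

/-- The relation on sources coded by the facts, where a target is identified with the source
to which it is related by `same`. -/
def FactRel (g : Fin r → Q) (s : Symb) (x y : Q) : Prop :=
  ∃ y', IsFact g s.idx x y' ∧ IsFact g Symb.same.idx y y'

/-- Conditions on the constants `g` that force them into their intended positions. -/
def Anchored (g x : Fin r → Q) (z : Fin 4 → Q) : Prop :=
  (∀ j s, g j < z s) ∧ (∀ s t, s ≠ t → z s ≠ z t) ∧
    ∀ j j' : Fin r, (j : ℕ) + 1 = j' → g j < x j ∧ ¬ g j' < x j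

/-- A link of a successor chain, spelled out inside a block of four elements. -/
def ChainStep (g : Fin r → Q) (l₀ l₁ : Q) (c c' : Fin 4 → Q) : Prop :=
  (c 1 < c 0 ∧ c 1 < c 2 ∧ c 1 < l₁) ∧ (c 3 < c' 0 ∧ c 3 < c 2 ∧ c 3 < l₀) ∧
    Colored g 0 (c 0) ∧ Colored g 0 (c' 0) ∧ Colored g 1 (c 2)

/-- The beginning of a successor chain. -/
def ChainStart (g x : Fin r → Q) (z : Fin 4 → Q) (l₀ l₁ : Q) (c : Fin 4 → Q) : Prop :=
  Anchored g x z ∧ Colored g (2 + Symb.same.idx) l₀ ∧ Colored g (2 + Symb.succ.idx) l₁ ∧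
    FactRel g .zero (c 0) (c 0)

/-- The code `c₀` has a coded value at the endpoint of some chain of length `n`. -/
def HasChain (r : ℕ) (c₀ : Code) (n : ℕ) (Q : Type*) [PartialOrder Q] : Prop :=
  ∃ (g x : Fin r → Q) (z : Fin 4 → Q) (l₀ l₁ y : Q) (c : ℕ → Fin 4 → Q),
    ChainStart g x z l₀ l₁ (c 0) ∧ (∀ i < n, ChainStep g l₀ l₁ (c i) (c (i + 1))) ∧
      FactRel g (.eval c₀) (c n 0) y

/-- All anchored constants code a computation of the codes numbered up to `e`. -/
def CodesComputation (r e : ℕ) (Q : Type*) [PartialOrder Q] : Prop :=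
  ∀ (g x : Fin r → Q) (z : Fin 4 → Q), Anchored g x z → IsComputation (FactRel g) e

theorem dom_eval_of_hasChain [Finite Q] {e n : ℕ} {c₀ : Code} (hc : Encodable.encode c₀ ≤ e)
    (h₁ : CodesComputation r e Q) (h₂ : HasChain r c₀ n Q) : (c₀.eval n).Dom := by
  obtain ⟨g, x, z, l₀, l₁, y, c, ⟨ha, hl₀, hl₁, hz⟩, hs, hy⟩ := h₂
  refine (h₁ g x z ha).dom_eval hc (fun i => c i 0) hz (fun i hi => ?_) hy
  obtain ⟨⟨h1, h2, h3⟩, ⟨h4, h5, h6⟩, h7, h8, h9⟩ := hs i hi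
  exact ⟨c i 2, ⟨c i 1, l₁, h1, h2, h3, hl₁, h7, h9⟩, ⟨c i 3, l₀, h4, h5, h6, hl₀, h8, h9⟩⟩

end Relations

/-- The elements of the poset coding the standard relations on `{0, …, N}`. -/
inductive Node (r N K : ℕ) : Type u
  | top (c : Fin (r + 1)) (i : Fin (N + 1))
  | anchor (j : Fin r)
  | fact (s : Symb) (hs : 2 + s.idx < r) (i j : Fin (N + 1)) (h : Std K s i j)

namespace Node

variable {r N K : ℕ}

/-- The strict order of `Node`. -/
def Below : Node.{u} r N K → Node.{u} r N K → Prop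
  | anchor j, top c _ => (j : ℕ) < c
  | fact s _ i j _, top c k =>
    ((c : ℕ) = 0 ∧ k = i) ∨ ((c : ℕ) = 1 ∧ k = j) ∨ ((c : ℕ) = 2 + s.idx ∧ k = 0)
  | _, _ => False

theorem below_iff {a b : Node.{u} r N K} : Below a b ↔ (∃ c i, b = top c i) ∧ Below a b := by
  cases a <;> cases b <;> simp [Below]

theorem not_below_trans {a b c : Node.{u} r N K} (h₁ : Below a b) (h₂ : Below b c) : False := by
  cases a <;> cases b <;> cases c <;> simp_all [Below]

instance : PartialOrder (Node.{u} r N K) where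
  le a b := a = b ∨ Below a b
  le_refl _ := Or.inl rfl
  le_trans := by
    rintro a b c (rfl | h₁) (rfl | h₂)
    · exact Or.inl rfl
    · exact Or.inr h₂
    · exact Or.inr h₁
    · exact (not_below_trans h₁ h₂).elim
  le_antisymm := by
    rintro a b (rfl | h₁) (h | h₂)
    · rfl
    · rfl
    · exact h.symm
    · exact (not_below_trans h₁ h₂).elim

theorem le_iff {a b : Node.{u} r N K} : a ≤ b ↔ a = b ∨ Below a b := Iff.rfl

theorem lt_iff {a b : Node.{u} r N K} : a < b ↔ Below a b := by
  rw [lt_iff_le_not_ge, le_iff, le_iff]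
  constructor
  · rintro ⟨rfl | h, h'⟩
    · exact (h' (Or.inl rfl)).elim
    · exact h
  · rintro h
    refine ⟨Or.inr h, ?_⟩
    rintro (rfl | h')
    · exact not_below_trans h h
    · exact not_below_trans h h'

@[simp] theorem not_top_lt {c : Fin (r + 1)} {i : Fin (N + 1)} {b : Node.{u} r N K} :
    ¬ top c i < b := by
  rw [lt_iff]; cases b <;> simp [Below]

@[simp] theorem not_lt_anchor {j : Fin r} {a : Node.{u} r N K} : ¬ a < anchor j := by
  rw [lt_iff]; cases a <;> simp [Below]

@[simp] theorem not_lt_fact {s : Symb} {hs : 2 + s.idx < r} {i j : Fin (N + 1)}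
    {h : Std K s i j} {a : Node.{u} r N K} : ¬ a < fact s hs i j h := by
  rw [lt_iff]; cases a <;> simp [Below]

@[simp] theorem anchor_lt_top {j : Fin r} {c : Fin (r + 1)} {i : Fin (N + 1)} :
    (anchor j : Node.{u} r N K) < top c i ↔ (j : ℕ) < c := lt_iff

@[simp] theorem fact_lt_top {s : Symb} {hs : 2 + s.idx < r} {i j : Fin (N + 1)}
    {h : Std K s i j} {c : Fin (r + 1)} {k : Fin (N + 1)} :
    (fact s hs i j h : Node.{u} r N K) < top c k ↔ ((c : ℕ) = 0 ∧ k = i) ∨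
      ((c : ℕ) = 1 ∧ k = j) ∨ ((c : ℕ) = 2 + s.idx ∧ k = 0) := lt_iff

@[simp] theorem anchor_le_top {j : Fin r} {c : Fin (r + 1)} {i : Fin (N + 1)} :
    (anchor j : Node.{u} r N K) ≤ top c i ↔ (j : ℕ) < c := by
  rw [le_iff_lt_or_eq]; simp

@[simp] theorem fact_le_top {s : Symb} {hs : 2 + s.idx < r} {i j : Fin (N + 1)}
    {h : Std K s i j} {c : Fin (r + 1)} {k : Fin (N + 1)} :
    (fact s hs i j h : Node.{u} r N K) ≤ top c k ↔ ((c : ℕ) = 0 ∧ k = i) ∨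
      ((c : ℕ) = 1 ∧ k = j) ∨ ((c : ℕ) = 2 + s.idx ∧ k = 0) := by
  rw [le_iff_lt_or_eq]; simp

theorem exists_top_of_lt {a b : Node.{u} r N K} (h : a < b) : ∃ c i, b = top c i := by
  rw [lt_iff, below_iff] at h
  exact h.1

instance : Finite (Node.{u} r N K) := by
  let F : Node.{u} r N K → (Fin (r + 1) × Fin (N + 1)) ⊕ Fin r ⊕
      (Fin r × Fin (N + 1) × Fin (N + 1)) := fun a => match a with
    | top c i => .inl (c, i)
    | anchor j => .inr (.inl j)
    | fact s hs i j _ => .inr (.inr (⟨2 + s.idx, hs⟩, i, j))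
  refine Finite.of_injective F fun a b h => ?_
  cases a <;> cases b <;> simp [F] at h ⊢
  · exact h
  · exact h
  · exact ⟨Symb.idx_injective h.1, h.2⟩

theorem isMax_top {c : Fin (r + 1)} {i : Fin (N + 1)} : IsMax (top c i : Node.{u} r N K) := by
  rw [isMax_iff_forall_not_lt]; simp

theorem not_isMax_anchor {j : Fin r} : ¬ IsMax (anchor j : Node.{u} r N K) := by
  rw [isMax_iff_forall_not_lt]
  intro h
  exact h (top (Fin.last r) 0) (by simp)

theorem not_isMax_fact {s : Symb} {hs : 2 + s.idx < r} {i j : Fin (N + 1)}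
    {h : Std K s i j} : ¬ IsMax (fact s hs i j h : Node.{u} r N K) := by
  rw [isMax_iff_forall_not_lt]
  intro h
  exact h (top 0 i) (by simp)

theorem std_same (i : ℕ) : Std K .same i i := rfl

theorem std_fst (i : ℕ) : Std K .fst i i.unpair.1 := rfl

theorem isNiceBipartitePoset {r N K : ℕ} (hr : 9 ≤ r) (hN : 3 ≤ N) :
    IsNiceBipartitePoset (Node.{u} r N K) := by
  have hr0 : 0 < r := by omega
  refine ⟨fun a => ?_, ?_, ?_, fun a ha => ?_, fun b hb => ?_⟩
  · cases a with
    | top => exact Or.inl isMax_top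
    | anchor => exact Or.inr (by rw [isMin_iff_forall_not_lt]; simp)
    | fact => exact Or.inr (by rw [isMin_iff_forall_not_lt]; simp)
  · exact ⟨top 0 ⟨0, by omega⟩, top 0 ⟨1, by omega⟩, top 0 ⟨2, by omega⟩, isMax_top, isMax_top,
      isMax_top, by simp, by simp, by simp⟩
  · exact ⟨anchor ⟨0, by omega⟩, anchor ⟨1, by omega⟩, anchor ⟨2, by omega⟩, not_isMax_anchor,
      not_isMax_anchor, not_isMax_anchor, by simp, by simp, by simp⟩
  · cases a with
    | anchor => exact (not_isMax_anchor ha).elim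
    | fact => exact (not_isMax_fact ha).elim
    | top c i =>
      have hsame : 2 + Symb.same.idx < r := by simp only [Symb.idx]; omega
      constructor
      · rcases Nat.lt_or_ge c 2 with hc | hc
        · rcases (by omega : (c : ℕ) = 0 ∨ (c : ℕ) = 1) with hc | hc
          · have hfst : 2 + Symb.fst.idx < r := by simp only [Symb.idx]; omega
            exact ⟨fact .same hsame i i (std_same i),
              fact .fst hfst i ⟨(i : ℕ).unpair.1, (Nat.unpair_left_le _).trans_lt i.2⟩ (std_fst i),
              not_isMax_fact, not_isMax_fact, by simp, by simp [hc], by simp [hc]⟩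
          · exact ⟨fact .same hsame i i (std_same i), anchor ⟨0, hr0⟩,
              not_isMax_fact, not_isMax_anchor, by simp, by simp [hc], by simp [hc]⟩
        · exact ⟨anchor ⟨0, hr0⟩, anchor ⟨1, by omega⟩, not_isMax_anchor, not_isMax_anchor,
            by simp, anchor_lt_top.2 (show 0 < (c : ℕ) by omega),
            anchor_lt_top.2 (show 1 < (c : ℕ) by omega)⟩
      · rcases eq_or_ne (c : ℕ) r with hc | hc
        · refine ⟨fact .same hsame 0 0 (std_same _), not_isMax_fact, ?_⟩
          rw [fact_le_top]
          rintro (⟨h, -⟩ | ⟨h, -⟩ | ⟨h, -⟩) <;> omega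
        · refine ⟨anchor ⟨r - 1, by omega⟩, not_isMax_anchor, ?_⟩
          simp
          omega
  · cases b with
    | top => exact (hb isMax_top).elim
    | anchor j =>
      refine ⟨⟨top (Fin.last r) 0, top (Fin.last r) ⟨1, by omega⟩, isMax_top, isMax_top, ?_,
        by simp, by simp⟩, top 0 0, isMax_top, by simp⟩
      simp [Fin.ext_iff]
    | fact s hs i j h =>
      refine ⟨⟨top 0 i, top ⟨1, by omega⟩ j, isMax_top, isMax_top, ?_, by simp, by simp⟩,
        top (Fin.last r) 0, isMax_top, ?_⟩
      · simp [Fin.ext_iff]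
      · simp
        omega

theorem anchored_eq {g x : Fin r → Node.{u} r N K} {z : Fin 4 → Node.{u} r N K}
    (h : Anchored g x z) : g = anchor := by
  obtain ⟨hz, hinj, hx⟩ := h
  have hg : ∀ j, ∃ k, g j = anchor k := by
    intro j
    cases hj : g j with
    | anchor k => exact ⟨k, rfl⟩
    | top c i => exact absurd (hz j 0) (by simp [hj])
    | fact s hs i k h =>
      exfalso
      have hf : ∀ t, ∃ m : Fin 3,
          z t = ![top 0 i, top ⟨1, by omega⟩ k, top ⟨2 + s.idx, by omega⟩ 0] m := by
        intro t
        have ht := hz j t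
        obtain ⟨c, l, hcl⟩ := exists_top_of_lt ht
        rw [hj, hcl, fact_lt_top] at ht
        rcases ht with ⟨hc, rfl⟩ | ⟨hc, rfl⟩ | ⟨hc, rfl⟩
        · exact ⟨0, by simp [hcl, Fin.ext_iff, hc]⟩
        · exact ⟨1, by simp [hcl, Fin.ext_iff, hc]⟩
        · exact ⟨2, by simp [hcl, Fin.ext_iff, hc]⟩
      choose m hm using hf
      obtain ⟨s, t, hst, hmm⟩ := Fintype.exists_ne_map_eq_of_card_lt m (by simp)
      exact hinj s t hst (by rw [hm, hm, hmm])
  choose γ hγ using hg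
  have hstep : ∀ j j' : Fin r, (j : ℕ) + 1 = j' → γ j < γ j' := by
    intro j j' hjj
    obtain ⟨h1, h2⟩ := hx j j' hjj
    obtain ⟨c, i, hci⟩ := exists_top_of_lt h1
    rw [hci, hγ, anchor_lt_top] at h1 h2
    exact Fin.lt_def.2 (by omega)
  have hmono : StrictMono γ := by
    cases r with
    | zero => exact fun j => j.elim0
    | succ r => exact Fin.strictMono_iff_lt_succ.2 fun i => hstep _ _ (by simp)
  funext j
  rw [hγ, le_antisymm hmono.apply_le hmono.le_apply]

theorem anchored_anchor (hN : 3 ≤ N) : Anchored (anchor : Fin r → Node.{u} r N K)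
    (fun j => top j.succ 0) (fun s => top (Fin.last r) ⟨s, by omega⟩) := by
  refine ⟨by simp, fun s t hst => by simpa [Fin.ext_iff] using hst, fun j j' hjj => ?_⟩
  simp
  omega

theorem colored_top {c : ℕ} (hc : c ≤ r) {c' : Fin (r + 1)} {i : Fin (N + 1)} :
    Colored (anchor : Fin r → Node.{u} r N K) c (top c' i) ↔ (c' : ℕ) = c := by
  simp only [Colored, anchor_le_top]
  constructor
  · intro h
    by_contra hne
    rcases Nat.lt_or_gt_of_ne hne with h' | h'
    · exact absurd ((h ⟨c', by omega⟩).2 h') (by simp)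
    · exact absurd ((h ⟨c, by omega⟩).1 h') (by simp)
  · rintro rfl j
    rfl

theorem isFact_iff {s : Symb} (hs : 2 + s.idx < r) {x y : Node.{u} r N K} :
    IsFact anchor s.idx x y ↔ ∃ i j : Fin (N + 1), Std K s i j ∧ x = top 0 i ∧
      y = top ⟨1, by omega⟩ j := by
  constructor
  · rintro ⟨f, l, hfx, hfy, hfl, hl, hx, hy⟩
    obtain ⟨c₁, i₁, rfl⟩ := exists_top_of_lt hfx
    obtain ⟨c₂, i₂, rfl⟩ := exists_top_of_lt hfy
    obtain ⟨c₃, i₃, rfl⟩ := exists_top_of_lt hfl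
    rw [colored_top (by omega)] at hl hx hy
    cases f with
    | top => simp at hfx
    | anchor j => simp [hx] at hfx
    | fact t ht i j h =>
      simp only [fact_lt_top] at hfx hfy hfl
      have h1 : i₁ = i := by omega
      have h2 : i₂ = j := by omega
      have h3 : t = s := Symb.idx_injective (by omega)
      subst h1 h2 h3
      exact ⟨_, _, h, by simp [Fin.ext_iff, hx], by simp [Fin.ext_iff, hy]⟩
  · rintro ⟨i, j, h, rfl, rfl⟩
    refine ⟨fact s hs i j h, top ⟨2 + s.idx, by omega⟩ 0, by simp, by simp, by simp, ?_, ?_, ?_⟩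
    · rw [colored_top (by omega)]
    · rw [colored_top (by omega)]; rfl
    · rw [colored_top (by omega)]

theorem factRel_iff (hr : 9 ≤ r) {s : Symb} (hs : 2 + s.idx < r) {x y : Node.{u} r N K} :
    FactRel anchor s x y ↔ ∃ i j : Fin (N + 1), Std K s i j ∧ x = top 0 i ∧ y = top 0 j := by
  have hsame : 2 + Symb.same.idx < r := by simp only [Symb.idx]; omega
  simp only [FactRel, isFact_iff hs, isFact_iff hsame]
  constructor
  · rintro ⟨y', ⟨i, j, h, rfl, rfl⟩, k, l, hkl, rfl, h'⟩
    refine ⟨i, j, h, rfl, ?_⟩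
    simp only [top.injEq, true_and] at h'
    rw [h', Fin.ext hkl]
  · rintro ⟨i, j, h, rfl, rfl⟩
    exact ⟨_, ⟨i, j, h, rfl, rfl⟩, j, j, rfl, rfl, rfl⟩

theorem codesComputation {e : ℕ} (hKN : K ≤ N)
    (hN : ∀ d ≤ e, ∀ x y, y ∈ Code.evaln K (Denumerable.ofNat Code d) x → y ≤ N) :
    CodesComputation (9 + e) e (Node.{u} (9 + e) N K) := by
  intro g x z h
  obtain rfl := anchored_eq h
  have hidx : ∀ s : Symb, s.idx < 7 + e → 2 + s.idx < 9 + e := fun s hs => by omega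
  refine isComputation_of_std (ι := fun i => top 0 (Fin.ofNat (N + 1) i)) hKN hN
    (fun s hs i hi j hj => ?_) (fun s hs x y hxy => ?_)
  · rw [factRel_iff (by omega) (hidx s hs)]
    constructor
    · rintro ⟨i', j', h, h1, h2⟩
      simp only [top.injEq, true_and] at h1 h2
      rw [← h1, ← h2] at h
      simpa [Nat.mod_eq_of_lt (Nat.lt_succ_of_le hi), Nat.mod_eq_of_lt (Nat.lt_succ_of_le hj)]
        using h
    · intro h
      refine ⟨_, _, ?_, rfl, rfl⟩
      simpa [Nat.mod_eq_of_lt (Nat.lt_succ_of_le hi), Nat.mod_eq_of_lt (Nat.lt_succ_of_le hj)]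
        using h
  · rw [factRel_iff (by omega) (hidx s hs)] at hxy
    obtain ⟨i, j, -, rfl, rfl⟩ := hxy
    exact ⟨i, by omega, j, by omega, by simp, by simp⟩

theorem hasChain {e n y : ℕ} {c₀ : Code} (hc : Encodable.encode c₀ ≤ e) (hN : 3 ≤ N) (hn : n ≤ N)
    (hyN : y ≤ N) (hy : y ∈ Code.evaln K c₀ n) :
    HasChain (9 + e) c₀ n (Node.{u} (9 + e) N K) := by
  have hsame : 2 + Symb.same.idx < 9 + e := by simp only [Symb.idx]; omega
  have hsucc : 2 + Symb.succ.idx < 9 + e := by simp only [Symb.idx]; omega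
  have hblock : ∀ i, ∃ b : Fin 4 → Node.{u} (9 + e) N K, b 0 = top 0 (Fin.ofNat (N + 1) i) ∧
      (i < n → (b 1 < b 0 ∧ b 1 < b 2 ∧ b 1 < top ⟨2 + Symb.succ.idx, by omega⟩ 0) ∧
        (b 3 < top 0 (Fin.ofNat (N + 1) (i + 1)) ∧ b 3 < b 2 ∧
          b 3 < top ⟨2 + Symb.same.idx, by omega⟩ 0) ∧ Colored anchor 1 (b 2)) := by
    intro i
    by_cases hi : i < n
    · have h0 : ((Fin.ofNat (N + 1) i : Fin (N + 1)) : ℕ) = i := by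
        simp only [Fin.ofNat]; exact Nat.mod_eq_of_lt (by omega)
      have h1 : ((Fin.ofNat (N + 1) (i + 1) : Fin (N + 1)) : ℕ) = i + 1 := by
        simp only [Fin.ofNat]; exact Nat.mod_eq_of_lt (by omega)
      refine ⟨![top 0 (Fin.ofNat (N + 1) i), fact .succ hsucc (Fin.ofNat (N + 1) i)
        (Fin.ofNat (N + 1) (i + 1)) (by simp only [Std, h0, h1]),
        top ⟨1, by omega⟩ (Fin.ofNat (N + 1) (i + 1)),
        fact .same hsame (Fin.ofNat (N + 1) (i + 1)) (Fin.ofNat (N + 1) (i + 1)) (std_same _)],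
        rfl, fun _ => ⟨⟨fact_lt_top.2 (Or.inl ⟨rfl, rfl⟩),
          fact_lt_top.2 (Or.inr (Or.inl ⟨rfl, rfl⟩)), fact_lt_top.2 (Or.inr (Or.inr ⟨rfl, rfl⟩))⟩,
          ⟨fact_lt_top.2 (Or.inl ⟨rfl, rfl⟩), fact_lt_top.2 (Or.inr (Or.inl ⟨rfl, rfl⟩)),
          fact_lt_top.2 (Or.inr (Or.inr ⟨rfl, rfl⟩))⟩, (colored_top (by omega)).2 rfl⟩⟩
    · exact ⟨fun _ => top 0 (Fin.ofNat (N + 1) i), rfl, fun h => (hi h).elim⟩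
  choose b hb0 hb using hblock
  refine ⟨anchor, _, _, top ⟨2 + Symb.same.idx, by omega⟩ 0, top ⟨2 + Symb.succ.idx, by omega⟩ 0,
    top 0 (Fin.ofNat (N + 1) y), b, ⟨anchored_anchor hN, ?_, ?_, ?_⟩, fun i hi => ?_, ?_⟩
  · exact (colored_top (by omega)).2 rfl
  · exact (colored_top (by omega)).2 rfl
  · rw [hb0, factRel_iff (by omega) (by simp only [Symb.idx]; omega)]
    exact ⟨0, 0, ⟨rfl, rfl⟩, rfl, rfl⟩
  · obtain ⟨h1, h2, h3⟩ := hb i hi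
    refine ⟨h1, ?_, ?_, ?_, h3⟩
    · rw [hb0]; exact h2
    · rw [hb0]; exact (colored_top (by omega)).2 rfl
    · rw [hb0]; exact (colored_top (by omega)).2 rfl
  · rw [hb0, factRel_iff (by omega) (by simp only [Symb.idx]; omega)]
    refine ⟨_, _, ?_, rfl, rfl⟩
    simpa [Std, Nat.mod_eq_of_lt (Nat.lt_succ_of_le hn), Nat.mod_eq_of_lt (Nat.lt_succ_of_le hyN)]
      using hy

end Node

/-- The coded halting problem. -/
theorem exists_nice_iff_dom {e n : ℕ} {c₀ : Code} (hc : Encodable.encode c₀ ≤ e) :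
    (∃ (Q : Type u) (_ : PartialOrder Q), Finite Q ∧ IsNiceBipartitePoset Q ∧
      CodesComputation (9 + e) e Q ∧ HasChain (9 + e) c₀ n Q) ↔ (c₀.eval n).Dom := by
  constructor
  · rintro ⟨Q, _, _, -, h₁, h₂⟩
    exact dom_eval_of_hasChain hc h₁ h₂
  · intro h
    obtain ⟨y, hy⟩ := Part.dom_iff_mem.1 h
    obtain ⟨K, hK⟩ := Code.evaln_complete.1 hy
    obtain ⟨N, hN⟩ := exists_output_bound K e
    have hN' : ∀ d ≤ e, ∀ x y, y ∈ Code.evaln K (Denumerable.ofNat Code d) x → y ≤ N + K + 3 :=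
      fun d hd x y h => (hN d hd x y h).trans (by omega)
    have hnK := Code.evaln_bound hK
    exact ⟨Node.{u} (9 + e) (N + K + 3) K, inferInstance, inferInstance,
      Node.isNiceBipartitePoset (by omega) (by omega), Node.codesComputation (by omega) hN',
      Node.hasChain hc (by omega) (by omega) (hN' _ hc _ _ (by simpa using hK)) hK⟩

/-- A property of tuples in arbitrary posets. -/
abbrev TupleProp (α : Type) := ∀ (Q : Type u) [PartialOrder Q], (α → Q) → Prop

/-- A property is quantifier-free when it depends only on the order relations in the tuple. -/
def IsQFProp {α : Type} (P : TupleProp.{u} α) : Prop :=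
  ∀ (Q : Type u) [PartialOrder Q] (Q' : Type u) [PartialOrder Q'] (v : α → Q) (v' : α → Q'),
    (∀ a b, v a ≤ v b ↔ v' a ≤ v' b) → (P Q v ↔ P Q' v')

/-- Properties definable by an existential formula, in nonempty posets. -/
def IsExProp {α : Type} (P : TupleProp.{u} α) : Prop :=
  ∃ (β : Type) (_ : Finite β) (R : TupleProp.{u} (α ⊕ β)), IsQFProp R ∧
    ∀ (Q : Type u) [PartialOrder Q] [Nonempty Q] (v : α → Q),
      P Q v ↔ ∃ w : β → Q, R Q (Sum.elim v w)

/-- Properties definable by a `∀∃`-formula, in nonempty posets. -/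
def IsAEProp {α : Type} (P : TupleProp.{u} α) : Prop :=
  ∃ (γ : Type) (_ : Finite γ) (R : TupleProp.{u} (α ⊕ γ)), IsExProp R ∧
    ∀ (Q : Type u) [PartialOrder Q] [Nonempty Q] (v : α → Q),
      P Q v ↔ ∀ w : γ → Q, R Q (Sum.elim v w)

section QF

variable {α β : Type} {P P' : TupleProp.{u} α}

theorem isQFProp_const (p : Prop) : IsQFProp.{u} (α := α) (fun _ _ _ => p) :=
  fun _ _ _ _ _ _ _ => Iff.rfl

theorem isQFProp_le (a b : α) : IsQFProp.{u} (fun _ _ v => v a ≤ v b) :=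
  fun _ _ _ _ _ _ h => h a b

theorem isQFProp_lt (a b : α) : IsQFProp.{u} (fun _ _ v => v a < v b) :=
  fun _ _ _ _ _ _ h => by simp only [lt_iff_le_not_ge, h]

theorem isQFProp_eq (a b : α) : IsQFProp.{u} (fun _ _ v => v a = v b) :=
  fun _ _ _ _ _ _ h => by simp only [le_antisymm_iff, h]

theorem IsQFProp.not (h : IsQFProp P) : IsQFProp (fun Q _ v => ¬ P Q v) :=
  fun _ _ _ _ _ _ hv => not_congr (h _ _ _ _ hv)

theorem IsQFProp.and (h : IsQFProp P) (h' : IsQFProp P') :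
    IsQFProp (fun Q _ v => P Q v ∧ P' Q v) :=
  fun _ _ _ _ _ _ hv => and_congr (h _ _ _ _ hv) (h' _ _ _ _ hv)

theorem IsQFProp.or (h : IsQFProp P) (h' : IsQFProp P') :
    IsQFProp (fun Q _ v => P Q v ∨ P' Q v) :=
  fun _ _ _ _ _ _ hv => or_congr (h _ _ _ _ hv) (h' _ _ _ _ hv)

theorem IsQFProp.imp (h : IsQFProp P) (h' : IsQFProp P') :
    IsQFProp (fun Q _ v => P Q v → P' Q v) :=
  fun _ _ _ _ _ _ hv => imp_congr (h _ _ _ _ hv) (h' _ _ _ _ hv)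

theorem IsQFProp.iff (h : IsQFProp P) (h' : IsQFProp P') :
    IsQFProp (fun Q _ v => P Q v ↔ P' Q v) :=
  fun _ _ _ _ _ _ hv => iff_congr (h _ _ _ _ hv) (h' _ _ _ _ hv)

theorem IsQFProp.forall {κ : Sort*} {P : κ → TupleProp.{u} α} (h : ∀ k, IsQFProp (P k)) :
    IsQFProp (fun Q _ v => ∀ k, P k Q v) :=
  fun _ _ _ _ _ _ hv => forall_congr' fun k => h k _ _ _ _ hv

theorem IsQFProp.reindex (h : IsQFProp P) (f : α → β) :
    IsQFProp (fun Q _ v => P Q (fun a => v (f a))) :=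
  fun _ _ _ _ _ _ hv => h _ _ _ _ fun a b => hv (f a) (f b)

end QF

section Ex

variable {α : Type} {P P' : TupleProp.{u} α}

theorem IsQFProp.isExProp (h : IsQFProp P) : IsExProp P := by
  refine ⟨Empty, inferInstance, _, h.reindex Sum.inl, fun Q _ _ v => ?_⟩
  exact ⟨fun h => ⟨Empty.elim, h⟩, fun ⟨_, h⟩ => h⟩

theorem IsExProp.reindex {β : Type} (h : IsExProp P) (f : α → β) :
    IsExProp (fun Q _ v => P Q (fun a => v (f a))) := by
  obtain ⟨γ, hγ, R, hR, hP⟩ := h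
  refine ⟨γ, hγ, _, hR.reindex (Sum.map f id), fun Q _ _ v => ?_⟩
  have e : ∀ w : γ → Q, (fun a => Sum.elim v w (Sum.map f id a)) =
      Sum.elim (fun a => v (f a)) w := fun w => by ext (i | i) <;> rfl
  simp only [hP, e]

theorem IsExProp.and (h : IsExProp P) (h' : IsExProp P') :
    IsExProp (fun Q _ v => P Q v ∧ P' Q v) := by
  obtain ⟨β, hβ, R, hR, hP⟩ := h
  obtain ⟨β', hβ', R', hR', hP'⟩ := h'
  refine ⟨β ⊕ β', inferInstance, _, (hR.reindex (Sum.map id Sum.inl)).and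
    (hR'.reindex (Sum.map id Sum.inr)), fun Q _ _ v => ?_⟩
  have e : ∀ w : β ⊕ β' → Q, (fun a => Sum.elim v w (Sum.map id Sum.inl a)) =
      Sum.elim v (fun b => w (.inl b)) := fun w => by ext (i | i) <;> rfl
  have e' : ∀ w : β ⊕ β' → Q, (fun a => Sum.elim v w (Sum.map id Sum.inr a)) =
      Sum.elim v (fun b => w (.inr b)) := fun w => by ext (i | i) <;> rfl
  simp only [hP, hP', e, e']
  constructor
  · rintro ⟨⟨w, h⟩, ⟨w', h'⟩⟩
    exact ⟨Sum.elim w w', h, h'⟩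
  · rintro ⟨w, h, h'⟩
    exact ⟨⟨_, h⟩, ⟨_, h'⟩⟩

theorem IsExProp.or (h : IsExProp P) (h' : IsExProp P') :
    IsExProp (fun Q _ v => P Q v ∨ P' Q v) := by
  obtain ⟨β, hβ, R, hR, hP⟩ := h
  obtain ⟨β', hβ', R', hR', hP'⟩ := h'
  refine ⟨β ⊕ β', inferInstance, _, (hR.reindex (Sum.map id Sum.inl)).or
    (hR'.reindex (Sum.map id Sum.inr)), fun Q _ _ v => ?_⟩
  have e : ∀ w : β ⊕ β' → Q, (fun a => Sum.elim v w (Sum.map id Sum.inl a)) =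
      Sum.elim v (fun b => w (.inl b)) := fun w => by ext (i | i) <;> rfl
  have e' : ∀ w : β ⊕ β' → Q, (fun a => Sum.elim v w (Sum.map id Sum.inr a)) =
      Sum.elim v (fun b => w (.inr b)) := fun w => by ext (i | i) <;> rfl
  obtain ⟨q⟩ := ‹Nonempty Q›
  simp only [hP, hP', e, e']
  constructor
  · rintro (⟨w, h⟩ | ⟨w', h'⟩)
    · exact ⟨Sum.elim w fun _ => q, Or.inl h⟩
    · exact ⟨Sum.elim (fun _ => q) w', Or.inr h'⟩
  · rintro ⟨w, h | h'⟩
    · exact Or.inl ⟨_, h⟩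
    · exact Or.inr ⟨_, h'⟩

theorem IsExProp.exists_tuple {κ : Type} [Finite κ]
    {P : ∀ (Q : Type u) [PartialOrder Q], (α → Q) → (κ → Q) → Prop}
    (h : IsExProp (α := α ⊕ κ) (fun Q _ v => P Q (fun a => v (.inl a)) (fun k => v (.inr k)))) :
    IsExProp (fun Q _ v => ∃ x : κ → Q, P Q v x) := by
  obtain ⟨β, hβ, R, hR, hP⟩ := h
  refine ⟨κ ⊕ β, inferInstance, _, hR.reindex (Equiv.sumAssoc α κ β), fun Q _ _ v => ?_⟩
  have e : ∀ w : κ ⊕ β → Q, (fun a => Sum.elim v w (Equiv.sumAssoc α κ β a)) =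
      Sum.elim (Sum.elim v fun k => w (.inl k)) (fun b => w (.inr b)) := fun w => by
    ext ((i | i) | i) <;> rfl
  have hP' := fun x : κ → Q => hP Q (Sum.elim v x)
  simp only [Sum.elim_inl, Sum.elim_inr] at hP'
  simp only [hP', e]
  constructor
  · rintro ⟨x, w, h⟩
    exact ⟨Sum.elim x w, h⟩
  · rintro ⟨w, h⟩
    exact ⟨_, _, h⟩

theorem IsExProp.exists {P : ∀ (Q : Type u) [PartialOrder Q], (α → Q) → Q → Prop}
    (h : IsExProp (α := α ⊕ Unit) (fun Q _ v => P Q (fun a => v (.inl a)) (v (.inr ())))) :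
    IsExProp (fun Q _ v => ∃ x : Q, P Q v x) := by
  have h' := IsExProp.exists_tuple (P := fun Q _ v (x : Unit → Q) => P Q v (x ())) h
  convert h' using 5 with Q _ v
  exact ⟨fun ⟨x, hx⟩ => ⟨fun _ => x, hx⟩, fun ⟨x, hx⟩ => ⟨x (), hx⟩⟩

end Ex

section AE

variable {α : Type} {P P' : TupleProp.{u} α}

theorem IsExProp.isAEProp (h : IsExProp P) : IsAEProp P := by
  refine ⟨Empty, inferInstance, _, h.reindex Sum.inl, fun Q _ _ v => ?_⟩
  exact ⟨fun h _ => h, fun h => h Empty.elim⟩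

theorem IsAEProp.and (h : IsAEProp P) (h' : IsAEProp P') :
    IsAEProp (fun Q _ v => P Q v ∧ P' Q v) := by
  obtain ⟨β, hβ, R, hR, hP⟩ := h
  obtain ⟨β', hβ', R', hR', hP'⟩ := h'
  refine ⟨β ⊕ β', inferInstance, _, (hR.reindex (Sum.map id Sum.inl)).and
    (hR'.reindex (Sum.map id Sum.inr)), fun Q _ _ v => ?_⟩
  have e : ∀ w : β ⊕ β' → Q, (fun a => Sum.elim v w (Sum.map id Sum.inl a)) =
      Sum.elim v (fun b => w (.inl b)) := fun w => by ext (i | i) <;> rfl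
  have e' : ∀ w : β ⊕ β' → Q, (fun a => Sum.elim v w (Sum.map id Sum.inr a)) =
      Sum.elim v (fun b => w (.inr b)) := fun w => by ext (i | i) <;> rfl
  obtain ⟨q⟩ := ‹Nonempty Q›
  simp only [hP, hP', e, e']
  constructor
  · rintro ⟨h, h'⟩ w
    exact ⟨h _, h' _⟩
  · exact fun h => ⟨fun w => (h (Sum.elim w fun _ => q)).1,
      fun w => (h (Sum.elim (fun _ => q) w)).2⟩

theorem isAEProp_forall_fin {n : ℕ} {P : Fin n → TupleProp.{u} α} (h : ∀ k, IsAEProp (P k)) :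
    IsAEProp (fun Q _ v => ∀ k, P k Q v) := by
  induction n with
  | zero => simpa using (isQFProp_const True).isExProp.isAEProp
  | succ n ih =>
    simp only [Fin.forall_fin_succ]
    exact (h 0).and (ih fun k => h k.succ)

theorem IsAEProp.forall_tuple {κ : Type} [Finite κ]
    {P : ∀ (Q : Type u) [PartialOrder Q], (α → Q) → (κ → Q) → Prop}
    (h : IsAEProp (α := α ⊕ κ) (fun Q _ v => P Q (fun a => v (.inl a)) (fun k => v (.inr k)))) :
    IsAEProp (fun Q _ v => ∀ x : κ → Q, P Q v x) := by
  obtain ⟨β, hβ, R, hR, hP⟩ := h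
  refine ⟨κ ⊕ β, inferInstance, _, hR.reindex (Equiv.sumAssoc α κ β), fun Q _ _ v => ?_⟩
  have e : ∀ w : κ ⊕ β → Q, (fun a => Sum.elim v w (Equiv.sumAssoc α κ β a)) =
      Sum.elim (Sum.elim v fun k => w (.inl k)) (fun b => w (.inr b)) := fun w => by
    ext ((i | i) | i) <;> rfl
  have hP' := fun x : κ → Q => hP Q (Sum.elim v x)
  simp only [Sum.elim_inl, Sum.elim_inr] at hP'
  simp only [hP', e]
  exact ⟨fun h w => h _ _, fun h x w => h (Sum.elim x w)⟩

theorem IsAEProp.forall {P : ∀ (Q : Type u) [PartialOrder Q], (α → Q) → Q → Prop}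
    (h : IsAEProp (α := α ⊕ Unit) (fun Q _ v => P Q (fun a => v (.inl a)) (v (.inr ())))) :
    IsAEProp (fun Q _ v => ∀ x : Q, P Q v x) := by
  have h' := IsAEProp.forall_tuple (P := fun Q _ v (x : Unit → Q) => P Q v (x ())) h
  convert h' using 4 with Q _ v
  exact ⟨fun h x => h _, fun h x => h fun _ => x⟩

theorem IsQFProp.imp_isExProp (h : IsQFProp P) (h' : IsExProp P') :
    IsExProp (fun Q _ v => P Q v → P' Q v) := by
  simp only [imp_iff_not_or]
  exact h.not.isExProp.or h'

theorem IsAEProp.of_exProp_imp (h : IsExProp P) (h' : IsAEProp P') :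
    IsAEProp (fun Q _ v => P Q v → P' Q v) := by
  obtain ⟨β, hβ, R, hR, hP⟩ := h
  obtain ⟨β', hβ', R', hR', hP'⟩ := h'
  refine ⟨β ⊕ β', inferInstance, _, (hR.reindex (Sum.map id Sum.inl)).imp_isExProp
    (hR'.reindex (Sum.map id Sum.inr)), fun Q _ _ v => ?_⟩
  have e : ∀ w : β ⊕ β' → Q, (fun a => Sum.elim v w (Sum.map id Sum.inl a)) =
      Sum.elim v (fun b => w (.inl b)) := fun w => by ext (i | i) <;> rfl
  have e' : ∀ w : β ⊕ β' → Q, (fun a => Sum.elim v w (Sum.map id Sum.inr a)) =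
      Sum.elim v (fun b => w (.inr b)) := fun w => by ext (i | i) <;> rfl
  simp only [hP, hP', e, e']
  constructor
  · intro h w hw
    exact h ⟨_, hw⟩ _
  · rintro h ⟨w, hw⟩ w'
    exact h (Sum.elim w w') hw

end AE

section Definability

variable {α : Type} {r : ℕ}

theorem isQFProp_colored (g : Fin r → α) (c : ℕ) (a : α) :
    IsQFProp.{u} (fun _ _ v => Colored (fun j => v (g j)) c (v a)) :=
  .forall fun _ => (isQFProp_le _ _).iff (isQFProp_const _)

theorem isQFProp_anchored (g x : Fin r → α) (z : Fin 4 → α) :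
    IsQFProp.{u} (fun _ _ v => Anchored (fun j => v (g j)) (fun j => v (x j)) fun s => v (z s)) :=
  .and (.forall fun _ => .forall fun _ => isQFProp_lt _ _) <|
    .and (.forall fun _ => .forall fun _ => .imp (isQFProp_const _) (isQFProp_eq _ _).not) <|
    .forall fun _ => .forall fun _ => .imp (isQFProp_const _) <|
      .and (isQFProp_lt _ _) (isQFProp_lt _ _).not

theorem isExProp_isFact (g : Fin r → α) (k : ℕ) (a b : α) :
    IsExProp.{u} (fun _ _ v => IsFact (fun j => v (g j)) k (v a) (v b)) := by
  refine .exists (.exists (IsQFProp.isExProp ?_))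
  exact (isQFProp_lt _ _).and <| (isQFProp_lt _ _).and <| (isQFProp_lt _ _).and <|
    (isQFProp_colored _ _ _).and <| (isQFProp_colored _ _ _).and (isQFProp_colored _ _ _)

theorem isExProp_factRel (g : Fin r → α) (s : Symb) (a b : α) :
    IsExProp.{u} (fun _ _ v => FactRel (fun j => v (g j)) s (v a) (v b)) :=
  .exists (.and (isExProp_isFact _ _ _ _) (isExProp_isFact _ _ _ _))

theorem isExProp_splits (g : Fin r → α) (a b c : α) :
    IsExProp.{u} (fun _ _ v => Splits (FactRel fun j => v (g j)) (v a) (v b) (v c)) :=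
  .and (isExProp_factRel _ _ _ _) (isExProp_factRel _ _ _ _)

theorem isExProp_eq (a b : α) : IsExProp.{u} (fun _ _ v => v a = v b) :=
  (isQFProp_eq a b).isExProp

theorem isExProp_pairStep (g : Fin r → α) (a b c : α) :
    IsExProp.{u} (fun _ _ v => PairStep (FactRel fun j => v (g j)) (v a) (v b) (v c)) := by
  refine .or (.and ?_ (.and ?_ ?_)) (.exists (.exists (.exists (.and ?_ (.and ?_
    (.or (.and ?_ (.and ?_ ?_)) (.or (.and ?_ (.and ?_ ?_)) (.or (.and ?_ (.and ?_ ?_))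
      (.and ?_ (.and ?_ ?_)))))))))) <;>
  first
    | exact isExProp_factRel _ _ _ _
    | exact isExProp_splits _ _ _ _
    | exact isExProp_eq _ _

theorem isExProp_justified (g : Fin r → α) (c : Code) (a b : α) :
    IsExProp.{u} (fun _ _ v => Justified (FactRel fun j => v (g j)) c (v a) (v b)) := by
  cases c with
  | zero => exact isExProp_factRel _ _ _ _
  | succ => exact isExProp_factRel _ _ _ _
  | left => exact .exists (isExProp_splits _ _ _ _)
  | right => exact .exists (isExProp_splits _ _ _ _)
  | pair => exact .exists (.exists (.and (isExProp_factRel _ _ _ _)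
      (.and (isExProp_factRel _ _ _ _) (isExProp_splits _ _ _ _))))
  | comp => exact .exists (.and (isExProp_factRel _ _ _ _) (isExProp_factRel _ _ _ _))
  | prec =>
    refine .exists (.exists (.and ?_ (.or (.and ?_ ?_) (.exists (.exists (.exists (.exists
      (.exists (.and ?_ (.and ?_ (.and ?_ (.and ?_ (.and ?_ ?_))))))))))))) <;>
    first
      | exact isExProp_factRel _ _ _ _
      | exact isExProp_splits _ _ _ _
  | rfind' =>
    refine .exists (.exists (.exists (.and ?_ (.and ?_ (.or (.and ?_ ?_) (.exists (.exists
      (.exists (.and ?_ (.and ?_ (.and ?_ ?_)))))))))))  <;>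
    first
      | exact isExProp_factRel _ _ _ _
      | exact isExProp_splits _ _ _ _
      | exact isExProp_eq _ _

theorem isComputation_iff {Q : Type*} {rel : Symb → Q → Q → Prop} {e : ℕ} :
    IsComputation rel e ↔ (∀ x, rel .lt x x → False) ∧
      (∀ x y z, rel .lt x y → rel .lt y z → rel .lt x z) ∧
      (∀ x y, rel .succ x y → rel .lt x y) ∧
      (∀ x x' y, rel .succ x y → rel .succ x' y → x = x') ∧
      (∀ x y, rel .zero x x → rel .succ y x → False) ∧
      (∀ x y, rel .lt x y → rel .succ x y ∨ ∃ z, rel .succ z y ∧ rel .lt x z) ∧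
      (∀ a b c, Splits rel a b c → PairStep rel a b c) ∧
      ∀ k : Fin (e + 1), ∀ x y, rel (.eval (Denumerable.ofNat Code k)) x y →
        Justified rel (Denumerable.ofNat Code k) x y :=
  ⟨fun ⟨h1, h2, h3, h4, h5, h6, h7, h8⟩ => ⟨h1, h2, h3, h4, h5, h6, h7, h8⟩,
    fun ⟨h1, h2, h3, h4, h5, h6, h7, h8⟩ => ⟨h1, h2, h3, h4, h5, h6, h7, h8⟩⟩

theorem isAEProp_isComputation (g : Fin r → α) (e : ℕ) :
    IsAEProp.{u} (fun _ _ v => IsComputation (FactRel fun j => v (g j)) e) := by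
  simp only [isComputation_iff]
  refine .and ?_ (.and ?_ (.and ?_ (.and ?_ (.and ?_ (.and ?_ (.and ?_ ?_))))))
  · exact .forall (.of_exProp_imp (isExProp_factRel _ _ _ _)
      (isQFProp_const False).isExProp.isAEProp)
  · exact .forall (.forall (.forall (.of_exProp_imp (isExProp_factRel _ _ _ _)
      (.of_exProp_imp (isExProp_factRel _ _ _ _) (isExProp_factRel _ _ _ _).isAEProp))))
  · exact .forall (.forall (.of_exProp_imp (isExProp_factRel _ _ _ _)
      (isExProp_factRel _ _ _ _).isAEProp))
  · exact .forall (.forall (.forall (.of_exProp_imp (isExProp_factRel _ _ _ _)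
      (.of_exProp_imp (isExProp_factRel _ _ _ _) (isExProp_eq _ _).isAEProp))))
  · exact .forall (.forall (.of_exProp_imp (isExProp_factRel _ _ _ _)
      (.of_exProp_imp (isExProp_factRel _ _ _ _) (isQFProp_const False).isExProp.isAEProp)))
  · exact .forall (.forall (.of_exProp_imp (isExProp_factRel _ _ _ _)
      (IsExProp.isAEProp (.or (isExProp_factRel _ _ _ _)
        (.exists (.and (isExProp_factRel _ _ _ _) (isExProp_factRel _ _ _ _)))))))
  · exact .forall (.forall (.forall (.of_exProp_imp (isExProp_splits _ _ _ _)
      (isExProp_pairStep _ _ _ _).isAEProp)))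
  · exact isAEProp_forall_fin fun k => .forall (.forall (.of_exProp_imp
      (isExProp_factRel _ _ _ _) (isExProp_justified _ _ _ _).isAEProp))

theorem isAEProp_codesComputation (r e : ℕ) :
    IsAEProp.{u} (α := Empty) (fun Q _ _ => CodesComputation r e Q) :=
  .forall_tuple (.forall_tuple (.forall_tuple (.of_exProp_imp
    (isQFProp_anchored _ _ _).isExProp (isAEProp_isComputation _ _))))

theorem isQFProp_chainStep (g : Fin r → α) (l₀ l₁ : α) (c c' : Fin 4 → α) :
    IsQFProp.{u} (fun _ _ v => ChainStep (fun j => v (g j)) (v l₀) (v l₁) (fun s => v (c s))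
      fun s => v (c' s)) :=
  .and (.and (isQFProp_lt _ _) (.and (isQFProp_lt _ _) (isQFProp_lt _ _))) <|
    .and (.and (isQFProp_lt _ _) (.and (isQFProp_lt _ _) (isQFProp_lt _ _))) <|
    .and (isQFProp_colored _ _ _) <| .and (isQFProp_colored _ _ _) (isQFProp_colored _ _ _)

theorem isExProp_chainStart (g x : Fin r → α) (z : Fin 4 → α) (l₀ l₁ : α) (c : Fin 4 → α) :
    IsExProp.{u} (fun _ _ v => ChainStart (fun j => v (g j)) (fun j => v (x j))
      (fun s => v (z s)) (v l₀) (v l₁) fun s => v (c s)) :=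
  .and (isQFProp_anchored _ _ _).isExProp <| .and (isQFProp_colored _ _ _).isExProp <|
    .and (isQFProp_colored _ _ _).isExProp (isExProp_factRel _ _ _ _)

end Definability

section NormalForm

theorem exists_hasChain_matrix (r : ℕ) (c₀ : Code) :
    ∃ (δ : Type) (_ : Finite δ) (A T : TupleProp.{u} (δ ⊕ Fin 4))
      (S : TupleProp.{u} (δ ⊕ (Fin 4 ⊕ Fin 4))), IsQFProp A ∧ IsQFProp T ∧ IsQFProp S ∧
      ∀ (Q : Type u) [PartialOrder Q] [Nonempty Q] (n : ℕ), HasChain r c₀ n Q ↔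
        ∃ (p : δ → Q) (c : ℕ → Fin 4 → Q), A Q (Sum.elim p (c 0)) ∧
          (∀ i < n, S Q (Sum.elim p (Sum.elim (c i) (c (i + 1))))) ∧ T Q (Sum.elim p (c n)) := by
  let π := Fin r ⊕ Fin r ⊕ Fin 4 ⊕ Fin 3
  let g : Fin r → π := Sum.inl
  let x : Fin r → π := Sum.inr ∘ Sum.inl
  let z : Fin 4 → π := Sum.inr ∘ Sum.inr ∘ Sum.inl
  let l : Fin 3 → π := Sum.inr ∘ Sum.inr ∘ Sum.inr
  obtain ⟨β, hβ, A, hA, hA'⟩ := isExProp_chainStart.{u} (α := π ⊕ Fin 4) (Sum.inl ∘ g)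
    (Sum.inl ∘ x) (Sum.inl ∘ z) (.inl (l 0)) (.inl (l 1)) Sum.inr
  obtain ⟨β', hβ', T, hT, hT'⟩ := isExProp_factRel.{u} (α := π ⊕ Fin 4) (Sum.inl ∘ g)
    (.eval c₀) (.inr 0) (.inl (l 2))
  have hS := isQFProp_chainStep.{u} (α := π ⊕ Fin 4 ⊕ Fin 4) (Sum.inl ∘ g) (.inl (l 0))
    (.inl (l 1)) (Sum.inr ∘ Sum.inl) (Sum.inr ∘ Sum.inr)
  let j : π → π ⊕ β ⊕ β' := Sum.inl
  refine ⟨π ⊕ β ⊕ β', inferInstance, _, _, _,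
    hA.reindex (Sum.elim (Sum.map j id) fun b => .inl (.inr (.inl b))),
    hT.reindex (Sum.elim (Sum.map j id) fun b => .inl (.inr (.inr b))),
    hS.reindex (Sum.map j id), fun Q _ _ n => ?_⟩
  have eA : ∀ (p : π ⊕ β ⊕ β' → Q) (c : Fin 4 → Q), (fun a => Sum.elim p c (Sum.elim
      (Sum.map j id) (fun b => .inl (.inr (.inl b))) a)) = Sum.elim (Sum.elim (p ∘ j) c)
      fun b => p (.inr (.inl b)) := fun p c => by ext ((i | i) | i) <;> rfl
  have eT : ∀ (p : π ⊕ β ⊕ β' → Q) (c : Fin 4 → Q), (fun a => Sum.elim p c (Sum.elim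
      (Sum.map j id) (fun b => .inl (.inr (.inr b))) a)) = Sum.elim (Sum.elim (p ∘ j) c)
      fun b => p (.inr (.inr b)) := fun p c => by ext ((i | i) | i) <;> rfl
  simp only [eA, eT]
  constructor
  · rintro ⟨g', x', z', l₀, l₁, y, c, h0, hs, hn⟩
    let p : π → Q := Sum.elim g' (Sum.elim x' (Sum.elim z' ![l₀, l₁, y]))
    obtain ⟨w, hw⟩ := (hA' Q (Sum.elim p (c 0))).1 h0
    obtain ⟨w', hw'⟩ := (hT' Q (Sum.elim p (c n))).1 hn
    exact ⟨Sum.elim p (Sum.elim w w'), c, hw, hs, hw'⟩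
  · rintro ⟨p, c, h0, hs, hn⟩
    exact ⟨_, _, _, _, _, _, c, (hA' Q (Sum.elim (p ∘ j) (c 0))).2 ⟨_, h0⟩, hs,
      (hT' Q (Sum.elim (p ∘ j) (c n))).2 ⟨_, hn⟩⟩

/-- The variables of the matrix: universal ones, existential ones, and two blocks of a chain. -/
abbrev MatrixVar (a b : ℕ) := Fin a ⊕ Fin b ⊕ Fin 4 ⊕ Fin 4

/-- The values of the variables at the `i`-th link of a chain. -/
def matrixVal {Q : Type*} {a b : ℕ} (u : Fin a → Q) (w : Fin b → Q) (c : ℕ → Fin 4 → Q) (i : ℕ) :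
    MatrixVar a b → Q :=
  Sum.elim u (Sum.elim w (Sum.elim (c i) (c (i + 1))))

theorem exists_matrix (r e : ℕ) (c₀ : Code) :
    ∃ (a b : ℕ) (A T S : TupleProp.{u} (MatrixVar a b)), IsQFProp A ∧ IsQFProp T ∧ IsQFProp S ∧
      ∀ (Q : Type u) [PartialOrder Q] [Nonempty Q] (n : ℕ),
        (CodesComputation r e Q ∧ HasChain r c₀ n Q) ↔
          ∀ u : Fin a → Q, ∃ (w : Fin b → Q) (c : ℕ → Fin 4 → Q), A Q (matrixVal u w c 0) ∧
            (∀ i < n, S Q (matrixVal u w c i)) ∧ T Q (matrixVal u w c n) := by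
  obtain ⟨γ, hγ, R, ⟨β, hβ, B, hB, hB'⟩, hR⟩ := isAEProp_codesComputation.{u} r e
  obtain ⟨δ, hδ, A, T, S, hA, hT, hS, hC⟩ := exists_hasChain_matrix.{u} r c₀
  obtain ⟨a, ⟨f⟩⟩ := Finite.exists_equiv_fin γ
  obtain ⟨b, ⟨f'⟩⟩ := Finite.exists_equiv_fin (β ⊕ δ)
  let jβ : β → MatrixVar a b := fun i => .inr (.inl (f' (.inl i)))
  let jδ : δ → MatrixVar a b := fun i => .inr (.inl (f' (.inr i)))
  let k : Fin 4 ⊕ Fin 4 → MatrixVar a b := fun q => .inr (.inr q)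
  refine ⟨a, b, _, _, _,
    (hB.reindex (Sum.elim (Sum.elim Empty.elim (Sum.inl ∘ f)) jβ)).and
      (hA.reindex (Sum.elim jδ (k ∘ Sum.inl))), hT.reindex (Sum.elim jδ (k ∘ Sum.inl)),
    hS.reindex (Sum.elim jδ k), fun Q _ _ n => ?_⟩
  have eB : ∀ u (w : Fin b → Q) c i, (fun v => matrixVal u w c i (Sum.elim (Sum.elim Empty.elim
      (Sum.inl ∘ f)) jβ v)) = Sum.elim (Sum.elim Empty.elim (u ∘ f))
      (fun b => w (f' (.inl b))) := fun u w c i => by ext ((⟨⟨⟩⟩ | i) | i) <;> rfl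
  have eA : ∀ u (w : Fin b → Q) c i, (fun v => matrixVal u w c i (Sum.elim jδ (k ∘ Sum.inl) v)) =
      Sum.elim (fun b => w (f' (.inr b))) (c i) := fun u w c i => by ext (i | i) <;> rfl
  have eS : ∀ u (w : Fin b → Q) c i, (fun v => matrixVal u w c i (Sum.elim jδ k v)) =
      Sum.elim (fun b => w (f' (.inr b))) (Sum.elim (c i) (c (i + 1))) :=
    fun u w c i => by ext (i | i | i) <;> rfl
  simp only [eB, eA, eS, hC, hR Q Empty.elim, hB']
  constructor
  · rintro ⟨h1, p, c, h⟩ u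
    obtain ⟨w, hw⟩ := h1 (u ∘ f)
    refine ⟨Sum.elim w p ∘ f'.symm, c, ⟨?_, ?_⟩, ?_⟩
    · simpa [Function.comp_assoc] using hw
    · simpa using h.1
    · simpa using h.2
  · intro h
    refine ⟨fun u => ?_, ?_⟩
    · obtain ⟨w, c, ⟨h, -⟩, -⟩ := h (u ∘ f.symm)
      exact ⟨_, by simpa [Function.comp_assoc] using h⟩
    · obtain ⟨w, c, ⟨-, h1⟩, h2⟩ := h fun _ => Classical.arbitrary Q
      exact ⟨_, c, h1, h2⟩

end NormalForm

/-- Quantifier-free formulas about a partial order. -/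
inductive QFForm (α : Type) : Type
  | le (a b : α)
  | bot
  | imp (p q : QFForm α)

namespace QFForm

variable {α : Type}

/-- Satisfaction of a quantifier-free formula. -/
def Holds {Q : Type*} [PartialOrder Q] (v : α → Q) : QFForm α → Prop
  | le a b => v a ≤ v b
  | bot => False
  | imp p q => p.Holds v → q.Holds v

theorem exists_holds_iff_of_list (L : List (α × α)) : ∀ P : TupleProp.{u} α,
    (∀ (Q : Type u) [PartialOrder Q] (Q' : Type u) [PartialOrder Q'] (v : α → Q) (v' : α → Q'),
      (∀ p ∈ L, v p.1 ≤ v p.2 ↔ v' p.1 ≤ v' p.2) → (P Q v ↔ P Q' v')) →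
    ∃ θ : QFForm α, ∀ (Q : Type u) [PartialOrder Q] (v : α → Q), θ.Holds v ↔ P Q v := by
  induction L with
  | nil =>
    intro P hP
    by_cases h : ∃ (Q : Type u) (_ : PartialOrder Q) (v : α → Q), P Q v
    · obtain ⟨Q, _, v, h⟩ := h
      exact ⟨imp bot bot, fun Q' _ v' => ⟨fun _ => (hP Q Q' v v' (by simp)).1 h, fun _ => id⟩⟩
    · exact ⟨bot, fun Q _ v => ⟨False.elim, fun hv => h ⟨Q, _, v, hv⟩⟩⟩
  | cons p L ih =>
    intro P hP
    have key : ∀ s : Prop, ∃ θ : QFForm α, ∀ (Q : Type u) [PartialOrder Q] (v : α → Q),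
        (v p.1 ≤ v p.2 ↔ s) → (θ.Holds v ↔ P Q v) := by
      intro s
      obtain ⟨θ, hθ⟩ := ih (fun Q _ v => ∃ (Q' : Type u) (_ : PartialOrder Q') (v' : α → Q'),
        (v' p.1 ≤ v' p.2 ↔ s) ∧ (∀ p ∈ L, v' p.1 ≤ v' p.2 ↔ v p.1 ≤ v p.2) ∧ P Q' v') (by
          intro Q _ Q' _ v v' h
          have h' : ∀ (R : Type u) [PartialOrder R] (t : α → R),
              (∀ p ∈ L, t p.1 ≤ t p.2 ↔ v p.1 ≤ v p.2) ↔
                (∀ p ∈ L, t p.1 ≤ t p.2 ↔ v' p.1 ≤ v' p.2) := fun R _ t =>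
            forall₂_congr fun p hp => by rw [h p hp]
          simp only [h'])
      refine ⟨θ, fun Q _ v hv => ?_⟩
      rw [hθ]
      constructor
      · rintro ⟨Q', _, v', h1, h2, h3⟩
        exact (hP Q' Q v' v (List.forall_mem_cons.2 ⟨h1.trans hv.symm, h2⟩)).1 h3
      · exact fun h => ⟨Q, _, v, hv, fun _ _ => Iff.rfl, h⟩
    obtain ⟨θ₁, h₁⟩ := key True
    obtain ⟨θ₂, h₂⟩ := key False
    refine ⟨imp (imp (imp (le p.1 p.2) θ₁) (imp (imp (imp (le p.1 p.2) bot) θ₂) bot)) bot,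
      fun Q _ v => ?_⟩
    simp only [Holds]
    by_cases h : v p.1 ≤ v p.2
    · simp [h, h₁ Q v (by simp [h])]
    · simp [h, h₂ Q v (by simp [h])]

theorem exists_holds_iff [Finite α] {P : TupleProp.{u} α} (hP : IsQFProp P) :
    ∃ θ : QFForm α, ∀ (Q : Type u) [PartialOrder Q] (v : α → Q), θ.Holds v ↔ P Q v := by
  cases nonempty_fintype α
  refine exists_holds_iff_of_list Finset.univ.toList P fun Q _ Q' _ v v' h => hP Q Q' v v' ?_
  exact fun a b => h (a, b) (by simp)

end QFForm

section Formulas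

namespace QFForm

variable {α : Type}

/-- A quantifier-free formula, with `f` giving the de Bruijn indices of the variables. -/
def toBounded (N : ℕ) [NeZero N] (f : α → ℕ) : QFForm α → Language.order.BoundedFormula Empty N
  | le p q => .rel orderRel.le
      ![.var (.inr (Fin.ofNat N (f p))), .var (.inr (Fin.ofNat N (f q)))]
  | bot => .falsum
  | imp p q => (p.toBounded N f).imp (q.toBounded N f)

theorem isQF_toBounded (N : ℕ) [NeZero N] (f : α → ℕ) (θ : QFForm α) :
    (θ.toBounded N f).IsQF := by
  induction θ with
  | le => exact .of_isAtomic (.rel _ _)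
  | bot => exact .falsum
  | imp _ _ hp hq => exact hp.imp hq

theorem realize_toBounded {Q : Type*} [PartialOrder Q] {N : ℕ} [NeZero N] {f : α → ℕ}
    {θ : QFForm α} {v : Empty → Q} {xs : Fin N → Q} :
    (θ.toBounded N f).Realize v xs ↔ θ.Holds fun p => xs (Fin.ofNat N (f p)) := by
  induction θ with
  | le => exact Iff.rfl
  | bot => exact Iff.rfl
  | imp _ _ hp hq => exact imp_congr hp hq

end QFForm

theorem encode_sentence (φ : Language.order.Sentence) :
    Encodable.encode φ = Encodable.encode (FirstOrder.Language.BoundedFormula.listEncode φ) := rfl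

theorem encode_list_eq {β : Type*} [Encodable β] (l : List β) :
    Encodable.encode l = Encodable.encode (l.map Encodable.encode) := by
  induction l with
  | nil => rfl
  | cons b l ih => simp [Encodable.encode_list_cons, ih]

/-- The list of the codes of the symbols of a formula. -/
def symbolCodes {N : ℕ} (φ : Language.order.BoundedFormula Empty N) : List ℕ :=
  φ.listEncode.map Encodable.encode

theorem encode_eq_symbolCodes (φ : Language.order.Sentence) :
    Encodable.encode φ = Encodable.encode (symbolCodes φ) := by
  rw [encode_sentence, encode_list_eq, symbolCodes]

section

variable {N : ℕ}

theorem symbolCodes_falsum :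
    symbolCodes (.falsum : Language.order.BoundedFormula Empty N) = [2 * (2 * (N + 2) + 1) + 1] :=
  rfl

theorem symbolCodes_imp (φ ψ : Language.order.BoundedFormula Empty N) :
    symbolCodes (φ.imp ψ) = 3 :: (symbolCodes φ ++ symbolCodes ψ) := by
  simp [symbolCodes, FirstOrder.Language.BoundedFormula.listEncode]

theorem symbolCodes_all (φ : Language.order.BoundedFormula Empty (N + 1)) :
    symbolCodes φ.all = 7 :: symbolCodes φ := by
  simp [symbolCodes, FirstOrder.Language.BoundedFormula.listEncode]

theorem symbolCodes_ex (φ : Language.order.BoundedFormula Empty (N + 1)) :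
    symbolCodes φ.ex =
      3 :: 7 :: 3 ::
        (symbolCodes φ ++ [2 * (2 * (N + 1 + 2) + 1) + 1, 2 * (2 * (N + 2) + 1) + 1]) := by
  change symbolCodes (((φ.imp .falsum).all).imp .falsum) = _
  simp [symbolCodes_imp, symbolCodes_all, symbolCodes_falsum]

theorem symbolCodes_le (i j : Fin N) :
    symbolCodes (.rel orderRel.le ![.var (.inr i), .var (.inr j)] :
      Language.order.BoundedFormula Empty N) =
    [1, 2 * (2 * N + 1) + 1, 2 * Nat.pair N (Nat.pair (2 * (2 * i.val + 1)) 0 + 1),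
      2 * Nat.pair N (Nat.pair (2 * (2 * j.val + 1)) 0 + 1)] := rfl

end

theorem exists_symbolCodes_exs (k : ℕ) : ∃ l l' : List ℕ,
    ∀ φ : Language.order.BoundedFormula Empty k,
      symbolCodes φ.exs = l ++ (symbolCodes φ ++ l') := by
  induction k with
  | zero => exact ⟨[], [], fun φ => by simp [FirstOrder.Language.BoundedFormula.exs]⟩
  | succ k ih =>
    obtain ⟨l, l', h⟩ := ih
    exact ⟨l ++ [3, 7, 3],
      [2 * (2 * (k + 1 + 2) + 1) + 1, 2 * (2 * (k + 2) + 1) + 1] ++ l', fun φ => by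
        rw [FirstOrder.Language.BoundedFormula.exs, h, symbolCodes_ex]
        simp⟩

theorem symbolCodes_allsLast (k l : ℕ) (ψ : Language.order.BoundedFormula Empty (k + l)) :
    symbolCodes (BoundedFormula.allsLast l ψ) = List.replicate l 7 ++ symbolCodes ψ := by
  induction l with
  | zero => simp [BoundedFormula.allsLast]
  | succ l ih =>
    rw [BoundedFormula.allsLast, ih, symbolCodes_all, List.replicate_succ']
    simp

theorem realize_allsLast {Q : Type*} [PartialOrder Q] {k l : ℕ}
    {ψ : Language.order.BoundedFormula Empty (k + l)} {v : Empty → Q} {xs : Fin k → Q} :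
    (BoundedFormula.allsLast l ψ).Realize v xs ↔
      ∀ ys : Fin l → Q, ψ.Realize v (Fin.append xs ys) := by
  induction l with
  | zero =>
    refine ⟨fun h ys => ?_, fun h => ?_⟩
    · simpa [Subsingleton.elim ys Fin.elim0, BoundedFormula.allsLast] using h
    · simpa [BoundedFormula.allsLast] using h Fin.elim0
  | succ l ih =>
    rw [BoundedFormula.allsLast, ih]
    refine ⟨fun h ys => ?_, fun h ys y => ?_⟩
    · have := h (Fin.init ys) (ys (Fin.last l))
      rwa [← Fin.append_snoc, Fin.snoc_init_self] at this
    · rw [← Fin.append_snoc]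
      exact h _

variable {a b : ℕ}

/-- The index of a variable of the matrix at the `i`-th link of a chain. -/
def varIndex (i : ℕ) : MatrixVar a b → ℕ :=
  Sum.elim (fun j => j) (Sum.elim (fun k => a + k)
    (Sum.elim (fun q => a + b + 4 * i + q) fun q => a + b + 4 * (i + 1) + q))

/-- The number of variables which are quantified universally. -/
abbrev tailLength (b n : ℕ) : ℕ := b + 4 * n + 8

theorem varIndex_lt {i n : ℕ} (h : i ≤ n) (p : MatrixVar a b) :
    varIndex i p < a + tailLength b n := by
  rcases p with p | p | p | p <;> simp only [varIndex, tailLength, Sum.elim_inl, Sum.elim_inr] <;>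
    omega

theorem primrec_varIndex (p : MatrixVar a b) : Primrec fun i => varIndex i p := by
  have h : ∀ c d : ℕ, Primrec fun i : ℕ => c + 4 * i + d := fun c d =>
    Primrec.nat_add.comp (Primrec.nat_add.comp (.const c)
      (Primrec.nat_mul.comp (.const 4) .id)) (.const d)
  rcases p with p | p | p | p
  · exact .const _
  · exact .const _
  · exact h _ _
  · exact (h _ _).comp .succ

theorem exists_eq_matrixVal {Q : Type*} (u : Fin a → Q) (X : ℕ → Q) (hX : ∀ j : Fin a, X j = u j) :
    ∃ (w : Fin b → Q) (c : ℕ → Fin 4 → Q), ∀ i, X ∘ varIndex i = matrixVal u w c i :=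
  ⟨fun k => X (a + k), fun i q => X (a + b + 4 * i + q), fun i => by
    ext (p | p | p | p)
    · exact hX p
    all_goals rfl⟩

theorem exists_comp_varIndex_eq {Q : Type*} (u : Fin a → Q) (w : Fin b → Q) (c : ℕ → Fin 4 → Q) :
    ∃ X : ℕ → Q, (∀ j : Fin a, X j = u j) ∧ ∀ i, X ∘ varIndex i = matrixVal u w c i := by
  let X : ℕ → Q := fun j => if h : j < a then u ⟨j, h⟩ else
    if h : j - a < b then w ⟨j - a, h⟩ else c ((j - a - b) / 4) (Fin.ofNat 4 (j - a - b))
  have hc : ∀ i (q : Fin 4), X (a + b + 4 * i + q) = c i q := fun i q => by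
    have h1 : (a + b + 4 * i + q - a - b) / 4 = i := by omega
    have h2 : Fin.ofNat 4 (a + b + 4 * i + q - a - b) = q := by
      ext
      simp only [Fin.val_ofNat]
      omega
    simp only [X, h1, h2]
    rw [dif_neg (by omega), dif_neg (by omega)]
  refine ⟨X, fun j => by simp [X], fun i => ?_⟩
  ext (p | p | p | p)
  · simp [X, varIndex, matrixVal]
  · simp [X, varIndex, matrixVal]
  · exact hc i p
  · exact hc (i + 1) p

/-- The formula refuting the existence of a chain of length `n`. -/
def matrixFormula (N : ℕ) [NeZero N] (A T S : QFForm (MatrixVar a b)) (n : ℕ) :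
    Language.order.BoundedFormula Empty N :=
  (A.toBounded N (varIndex 0)).imp
    ((List.range n).foldr (fun i χ => (S.toBounded N (varIndex i)).imp χ)
      ((T.toBounded N (varIndex n)).imp .falsum))

section Formula

variable {N : ℕ} [NeZero N] {A T S : QFForm (MatrixVar a b)} {n : ℕ}

theorem isQF_matrixFormula : (matrixFormula N A T S n).IsQF := by
  refine (A.isQF_toBounded _ _).imp ?_
  induction List.range n with
  | nil => exact (T.isQF_toBounded _ _).imp .falsum
  | cons i l ih => exact (S.isQF_toBounded _ _).imp ih

theorem realize_matrixFormula {Q : Type*} [PartialOrder Q] {v : Empty → Q} {xs : Fin N → Q} :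
    (matrixFormula N A T S n).Realize v xs ↔
      ¬ (A.Holds ((fun j => xs (Fin.ofNat N j)) ∘ varIndex 0) ∧
        (∀ i < n, S.Holds ((fun j => xs (Fin.ofNat N j)) ∘ varIndex i)) ∧
        T.Holds ((fun j => xs (Fin.ofNat N j)) ∘ varIndex n)) := by
  have key : ∀ (l : List ℕ) (χ : Language.order.BoundedFormula Empty N),
      (l.foldr (fun i χ => (S.toBounded N (varIndex i)).imp χ) χ).Realize v xs ↔
        ((∀ i ∈ l, S.Holds ((fun j => xs (Fin.ofNat N j)) ∘ varIndex i)) → χ.Realize v xs) := by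
    intro l χ
    induction l with
    | nil => simp
    | cons i l ih =>
      rw [List.foldr_cons, FirstOrder.Language.BoundedFormula.realize_imp, ih,
        QFForm.realize_toBounded, List.forall_mem_cons, and_imp]
      rfl
  rw [matrixFormula, FirstOrder.Language.BoundedFormula.realize_imp, key,
    FirstOrder.Language.BoundedFormula.realize_imp, QFForm.realize_toBounded,
    QFForm.realize_toBounded, not_and, not_and]
  simp only [List.mem_range]
  rfl

theorem symbolCodes_matrixFormula : symbolCodes (matrixFormula N A T S n) =
    3 :: (symbolCodes (A.toBounded N (varIndex 0)) ++
      ((List.range n).flatMap (fun i => 3 :: symbolCodes (S.toBounded N (varIndex i))) ++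
        (3 :: (symbolCodes (T.toBounded N (varIndex n)) ++
          [2 * (2 * (N + 2) + 1) + 1])))) := by
  rw [matrixFormula, symbolCodes_imp]
  congr 2
  induction List.range n with
  | nil => simp [symbolCodes_imp, symbolCodes_falsum]
  | cons i l ih => simp [symbolCodes_imp, ih]

end Formula

/-- The sentence refuting the existence of a chain of length `n`. -/
def chainSentence (A T S : QFForm (MatrixVar a b)) (n : ℕ) : Language.order.Sentence :=
  (BoundedFormula.allsLast (tailLength b n)
    (matrixFormula (a + tailLength b n) A T S n)).exs

theorem isEASentence_chainSentence (A T S : QFForm (MatrixVar a b)) (n : ℕ) :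
    IsEASentence (chainSentence A T S n) :=
  ⟨_, _, _, isQF_matrixFormula, rfl⟩

theorem models_chainSentence_iff {Q : Type*} [PartialOrder Q] {A T S : QFForm (MatrixVar a b)}
    {n : ℕ} : Q ⊨ chainSentence A T S n ↔
      ¬ ∀ u : Fin a → Q, ∃ (w : Fin b → Q) (c : ℕ → Fin 4 → Q), A.Holds (matrixVal u w c 0) ∧
        (∀ i < n, S.Holds (matrixVal u w c i)) ∧ T.Holds (matrixVal u w c n) := by
  rw [Sentence.Realize, chainSentence, FirstOrder.Language.BoundedFormula.realize_exs, not_forall]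
  refine exists_congr fun u => ?_
  rw [realize_allsLast]
  simp only [realize_matrixFormula]
  rw [← not_exists, not_iff_not]
  have hu : ∀ (ys : Fin (tailLength b n) → Q) (j : Fin a),
      Fin.append u ys (Fin.ofNat (a + tailLength b n) j) = u j := fun ys j => by
    have : Fin.ofNat (a + tailLength b n) j = Fin.castAdd (tailLength b n) j := by
      ext
      simpa using Nat.mod_eq_of_lt (by omega)
    rw [this, Fin.append_left]
  constructor
  · rintro ⟨ys, h⟩
    obtain ⟨w, c, hw⟩ := exists_eq_matrixVal (b := b) u
      (fun j => Fin.append u ys (Fin.ofNat (a + tailLength b n) j)) (hu ys)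
    simp only [hw] at h
    exact ⟨w, c, h⟩
  · rintro ⟨w, c, h⟩
    obtain ⟨X, hX, hw⟩ := exists_comp_varIndex_eq u w c
    let ys : Fin (tailLength b n) → Q := fun j => X (a + j)
    have hys : ∀ j < a + tailLength b n,
        Fin.append u ys (Fin.ofNat (a + tailLength b n) j) = X j := by
      intro j hj
      have e : Fin.ofNat (a + tailLength b n) j = ⟨j, hj⟩ := Fin.ext (Nat.mod_eq_of_lt hj)
      by_cases h : j < a
      · exact (hu ys ⟨j, h⟩).trans (hX ⟨j, h⟩).symm
      · obtain ⟨k, rfl⟩ := Nat.exists_eq_add_of_le (not_lt.1 h)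
        rw [e]
        exact Fin.append_right u ys ⟨k, by omega⟩
    have hys' : ∀ i ≤ n, (fun j => Fin.append u ys (Fin.ofNat (a + tailLength b n) j)) ∘ varIndex i
        = matrixVal u w c i := fun i hi => by
      rw [← hw]
      ext p
      exact hys _ (varIndex_lt hi p)
    refine ⟨ys, ?_⟩
    rw [hys' 0 (Nat.zero_le n), hys' n le_rfl]
    exact ⟨h.1, fun i hi => by rw [hys' i hi.le]; exact h.2.1 i hi, h.2.2⟩

theorem primrec_symbolCodes_toBounded {σ : Type*} [Primcodable σ] (N : σ → ℕ)
    [∀ s, NeZero (N s)] (hN : Primrec N) (i : σ → ℕ) (hi : Primrec i)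
    (θ : QFForm (MatrixVar a b)) :
    Primrec fun s => symbolCodes (θ.toBounded (N s) (varIndex (i s))) := by
  have odd : ∀ {f : σ → ℕ}, Primrec f → Primrec fun s => 2 * f s + 1 := fun hf =>
    Primrec.nat_double_succ.comp hf
  induction θ with
  | le p q =>
    have key : ∀ p : MatrixVar a b, Primrec fun s => 2 * Nat.pair (N s)
        (Nat.pair (2 * (2 * (varIndex (i s) p % N s) + 1)) 0 + 1) := fun p =>
      Primrec.nat_double.comp (Primrec₂.natPair.comp hN (Primrec.succ.comp
        (Primrec₂.natPair.comp (Primrec.nat_double.comp (odd (Primrec.nat_mod.comp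
          ((primrec_varIndex p).comp hi) hN))) (.const 0))))
    simp only [QFForm.toBounded, symbolCodes_le, Fin.val_ofNat]
    exact Primrec.list_cons.comp (.const 1) (Primrec.list_cons.comp (odd (odd hN))
      (Primrec.list_cons.comp (key p) (Primrec.list_cons.comp (key q) (.const []))))
  | bot =>
    exact Primrec.list_cons.comp (odd (odd (Primrec.nat_add.comp hN (.const 2)))) (.const [])
  | imp p q hp hq =>
    simp only [QFForm.toBounded, symbolCodes_imp]
    exact Primrec.list_cons.comp (.const 3) (Primrec.list_append.comp hp hq)

theorem primrec_encode_chainSentence (A T S : QFForm (MatrixVar a b)) :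
    Primrec fun n => Encodable.encode (chainSentence A T S n) := by
  obtain ⟨l, l', h⟩ := exists_symbolCodes_exs a
  simp only [encode_eq_symbolCodes, chainSentence, h, symbolCodes_allsLast,
    symbolCodes_matrixFormula]
  have hl : Primrec (tailLength b) := Primrec.nat_add.comp (Primrec.nat_add.comp (.const b)
    (Primrec.nat_mul.comp (.const 4) .id)) (.const 8)
  have hN : Primrec fun n => a + tailLength b n := Primrec.nat_add.comp (.const a) hl
  have hrep : Primrec fun n => List.replicate (tailLength b n) 7 := by
    refine (Primrec.list_map (Primrec.list_range.comp hl) (g := fun _ _ => 7)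
      (Primrec.const 7)).of_eq fun n => ?_
    simp [List.map_const']
  refine Primrec.encode.comp (Primrec.list_append.comp (.const l) (Primrec.list_append.comp
    (Primrec.list_append.comp hrep (Primrec.list_cons.comp (.const 3) (Primrec.list_append.comp
      (primrec_symbolCodes_toBounded _ hN _ (.const 0) A) (Primrec.list_append.comp
        (Primrec.list_flatMap .list_range ?_) (Primrec.list_cons.comp (.const 3)
          (Primrec.list_append.comp (primrec_symbolCodes_toBounded _ hN _ .id T)
            (Primrec.list_cons.comp (Primrec.nat_double_succ.comp (Primrec.nat_double_succ.comp
              (Primrec.nat_add.comp hN (.const 2)))) (.const [])))))))) (.const l')))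
  exact Primrec.list_cons.comp (.const 3)
    (primrec_symbolCodes_toBounded _ (hN.comp .fst) _ .snd S)

end Formulas

/-- A code which runs the program coded by its input on the input `0`. -/
theorem exists_code_eval_ofNat :
    ∃ c : Code, ∀ n, c.eval n = (Denumerable.ofNat Code n).eval 0 := by
  have h : Partrec fun n => (Denumerable.ofNat Code n).eval 0 :=
    Nat.Partrec.Code.eval_part.comp (Computable.ofNat Code) (Computable.const 0)
  obtain ⟨c, hc⟩ := Nat.Partrec.Code.exists_code.1 (Partrec.nat_iff.1 h)
  exact ⟨c, fun n => congrFun hc n⟩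

theorem exists_sentences : ∃ φ : ℕ → Language.order.Sentence,
    (Computable fun n => Encodable.encode (φ n)) ∧ (∀ n, IsEASentence (φ n)) ∧
    ∀ n, (∀ (Q : Type u) [PartialOrder Q], Finite Q → IsNiceBipartitePoset Q → Q ⊨ φ n) ↔
      ¬ ((Denumerable.ofNat Code n).eval 0).Dom := by
  obtain ⟨c₀, hc₀⟩ := exists_code_eval_ofNat
  let e := Encodable.encode c₀
  obtain ⟨a, b, A, T, S, hA, hT, hS, h⟩ := exists_matrix.{u} (9 + e) e c₀
  obtain ⟨A', hA'⟩ := QFForm.exists_holds_iff hA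
  obtain ⟨T', hT'⟩ := QFForm.exists_holds_iff hT
  obtain ⟨S', hS'⟩ := QFForm.exists_holds_iff hS
  refine ⟨chainSentence A' T' S', (primrec_encode_chainSentence A' T' S').to_comp,
    isEASentence_chainSentence A' T' S', fun n => ?_⟩
  rw [← hc₀, ← exists_nice_iff_dom.{u} (c₀ := c₀) (e := e) le_rfl]
  push Not
  refine forall₂_congr fun Q _ => forall₂_congr fun _ hQ => ?_
  have : Nonempty Q := ⟨hQ.2.1.choose⟩
  rw [models_chainSentence_iff]
  simp only [hA', hT', hS', ← h, not_and]

end PosetCoding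

/-- **Theorem (Statement 3).** The `∃∀`-theory of finite nice bipartite posets is
undecidable: the set of `∃∀`-sentences in the language of posets that are true in
every finite nice bipartite poset is not decidable. -/
theorem ea_theory_of_finite_nice_bipartite_posets_undecidable :
    ¬ ∃ f : ℕ → Bool, Computable f ∧
      ∀ φ : Language.order.Sentence,
        f (Encodable.encode φ) = true ↔
          (IsEASentence φ ∧
            ∀ (Q : Type u) [PartialOrder Q], Finite Q → IsNiceBipartitePoset Q → Q ⊨ φ) := by
  rintro ⟨f, hf, h⟩
  obtain ⟨φ, hφ, hEA, hdom⟩ := PosetCoding.exists_sentences.{u}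
  refine ComputablePred.halting_problem 0 (ComputablePred.computable_iff.2
    ⟨fun c => !f (Encodable.encode (φ (Encodable.encode c))), ?_, ?_⟩)
  · exact Primrec.not.to_comp.comp (hf.comp (hφ.comp Computable.encode))
  · ext c
    have := (h (φ (Encodable.encode c))).trans (and_iff_right (hEA _))
    rw [hdom, Denumerable.ofNat_encode] at this
    rw [Bool.not_eq_true', ← Bool.not_eq_true, this, not_not]
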